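/- arXiv:1812.04987 — 2 statements merged into one kernel-verified Lean document; each statement's English description precedes it below -/
import Mathlib

section
/- Let G be an infinite locally finite quasi-transitive connected graph and let (G1, G2) be a factorisation of G, realised by a tree amalgamation G1 ∗_T G2, such that G1 is infinite, G2 is finite and the amalgamating tree T is not a star (i.e., T has diameter greater than 2). Then G is quasi-isometric to a non-trivial tree amalgamation G1 ∗ G1 of two copies of G1. -/
open SimpleGraph

universe u v

/-! ### Quasi-isometries -/

/-- `f` is a `(γ, c)`-quasi-isometry from `G` to `H`. -/
def IsQIWith {V : Type u} {W : Type v} (G : SimpleGraph V) (H : SimpleGraph W)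
    (γ c : ℝ) (f : V → W) : Prop :=
  (∀ u v : V, γ⁻¹ * (G.dist u v : ℝ) - c ≤ (H.dist (f u) (f v) : ℝ) ∧
      (H.dist (f u) (f v) : ℝ) ≤ γ * (G.dist u v : ℝ) + c) ∧
  ∀ w : W, ∃ x : V, (H.dist w (f x) : ℝ) ≤ c

/-- `G` and `H` are quasi-isometric. -/
def QuasiIsometric {V : Type u} {W : Type v} (G : SimpleGraph V) (H : SimpleGraph W) : Prop :=
  ∃ (γ c : ℝ) (f : V → W), 1 ≤ γ ∧ 0 ≤ c ∧ IsQIWith G H γ c f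

/-- `H` embeds quasi-isometrically into `G`. -/
def QIEmbeds {V : Type u} {W : Type v} (H : SimpleGraph V) (G : SimpleGraph W) : Prop :=
  ∃ (γ c : ℝ) (f : V → W), 1 ≤ γ ∧ 0 ≤ c ∧
    ∀ u v : V, γ⁻¹ * (H.dist u v : ℝ) - c ≤ (G.dist (f u) (f v) : ℝ) ∧
      (G.dist (f u) (f v) : ℝ) ≤ γ * (H.dist u v : ℝ) + c

/-! ### Basic graph properties -/

/-- Every vertex has finite degree. -/
def LocallyFiniteGraph {V : Type u} (G : SimpleGraph V) : Prop :=
  ∀ v : V, (G.neighborSet v).Finite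

/-- The automorphism group of `G` has finitely many orbits on the vertex set. -/
def QuasiTransitive {V : Type u} (G : SimpleGraph V) : Prop :=
  ∃ s : Set V, s.Finite ∧ ∀ v : V, ∃ u ∈ s, ∃ g : G ≃g G, g u = v

/-- The automorphism group of `G` acts transitively on the vertex set. -/
def VertexTransitive {V : Type u} (G : SimpleGraph V) : Prop :=
  ∀ u v : V, ∃ g : G ≃g G, g u = v

/-- `G` has exactly one end. -/
def OneEnded {V : Type u} (G : SimpleGraph V) : Prop :=
  Nonempty G.end ∧ Subsingleton G.end

/-- `G` and `H` have the same number of ends (in the sense `0, 1, 2, …, ∞`). -/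
def SameNumberOfEnds {V : Type u} {W : Type v} (G : SimpleGraph V) (H : SimpleGraph W) : Prop :=
  (Infinite G.end ∧ Infinite H.end) ∨
    (Finite G.end ∧ Finite H.end ∧ Nat.card G.end = Nat.card H.end)

/-- There is `n : ℕ` such that every two distinct ends of `G` can be separated by removing
at most `n` vertices. -/
def Accessible {V : Type u} (G : SimpleGraph V) : Prop :=
  ∃ n : ℕ, ∀ e e' : G.end, e ≠ e' →
    ∃ K : Finset V, K.card ≤ n ∧ e.val (Opposite.op K) ≠ e'.val (Opposite.op K)

/-- `T` is a tree all of whose vertices have degree `3`. -/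
def CubicTree {W : Type u} (T : SimpleGraph W) : Prop :=
  T.IsTree ∧ ∀ v : W, (T.neighborSet v).ncard = 3

/-! ### Tree amalgamations -/

/-- The bipartite graph on `VT1 ⊕ VT2` given by the relation `R`. -/
def bipGraph {VT1 VT2 : Type u} (R : VT1 → VT2 → Prop) : SimpleGraph (VT1 ⊕ VT2) :=
  SimpleGraph.fromRel fun x y =>
    match x, y with
    | Sum.inl a, Sum.inr b => R a b
    | _, _ => False

/-- All the data of a tree amalgamation `G1 ∗_T G2`: a semiregular tree (given by its
bipartition classes `VT1`, `VT2` and the adjacency relation `Tadj`), a labelling of the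
edges of the tree by pairs of indices from `K1 × K2` such that the labels at each vertex of
`VTi` biject with `Ki` in the `i`-th coordinate, families of adhesion sets `S1`, `S2`
(all of the same cardinality), and the gluing bijections `glue k l : S1 k → S2 l`. -/
structure TreeAmalgData {V1 V2 : Type u} (G1 : SimpleGraph V1) (G2 : SimpleGraph V2) :
    Type (u + 1) where
  VT1 : Type u
  VT2 : Type u
  K1 : Type u
  K2 : Type u
  Tadj : VT1 → VT2 → Prop
  isTree : (bipGraph Tadj).IsTree
  lab1 : ∀ a b, Tadj a b → K1
  lab2 : ∀ a b, Tadj a b → K2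
  lab1_bij : ∀ a : VT1, Function.Bijective fun b : {b : VT2 // Tadj a b} => lab1 a b.1 b.2
  lab2_bij : ∀ b : VT2, Function.Bijective fun a : {a : VT1 // Tadj a b} => lab2 a.1 b a.2
  S1 : K1 → Set V1
  S2 : K2 → Set V2
  S1_nonempty : ∀ k, (S1 k).Nonempty
  glue : K1 → K2 → V1 → V2
  glue_bij : ∀ k l, Set.BijOn (glue k l) (S1 k) (S2 l)

namespace TreeAmalgData

variable {V1 V2 : Type u} {G1 : SimpleGraph V1} {G2 : SimpleGraph V2}

/-- The vertex set of the graph `G1 + G2`. -/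
abbrev PlusV (D : TreeAmalgData G1 G2) : Type u := (D.VT1 × V1) ⊕ (D.VT2 × V2)

/-- The relation describing the edges added between the copies `G1^u` and `G2^v`. -/
def cross (D : TreeAmalgData G1 G2) (p : D.VT1 × V1) (q : D.VT2 × V2) : Prop :=
  ∃ h : D.Tadj p.1 q.1, p.2 ∈ D.S1 (D.lab1 p.1 q.1 h) ∧
    q.2 = D.glue (D.lab1 p.1 q.1 h) (D.lab2 p.1 q.1 h) p.2

def plusRel (D : TreeAmalgData G1 G2) : D.PlusV → D.PlusV → Prop
  | Sum.inl p, Sum.inl p' => p.1 = p'.1 ∧ G1.Adj p.2 p'.2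
  | Sum.inr q, Sum.inr q' => q.1 = q'.1 ∧ G2.Adj q.2 q'.2
  | Sum.inl p, Sum.inr q => D.cross p q
  | Sum.inr _, Sum.inl _ => False

/-- The graph `G1 + G2`: disjoint copies of `G1` and `G2` along the tree, together with the
added matching edges between adhesion sets. -/
def plusGraph (D : TreeAmalgData G1 G2) : SimpleGraph D.PlusV :=
  SimpleGraph.fromRel D.plusRel

/-- The relation identifying the endpoints of the added edges (which get contracted). -/
def idRel (D : TreeAmalgData G1 G2) : D.PlusV → D.PlusV → Prop :=
  fun x y => ∃ p q, x = Sum.inl p ∧ y = Sum.inr q ∧ D.cross p q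

/-- Vertex set of the tree amalgamation `G1 ∗_T G2`. -/
abbrev AmalgV (D : TreeAmalgData G1 G2) : Type u := Quot D.idRel

/-- The canonical contraction map `ψ : V(G1 + G2) → V(G1 ∗_T G2)`. -/
def toAmalg (D : TreeAmalgData G1 G2) : D.PlusV → D.AmalgV := Quot.mk _

/-- The tree amalgamation `G1 ∗_T G2`, obtained from `G1 + G2` by contracting all the
added edges. -/
def amalgGraph (D : TreeAmalgData G1 G2) : SimpleGraph D.AmalgV :=
  SimpleGraph.fromRel fun x y =>
    ∃ a b, x = D.toAmalg a ∧ y = D.toAmalg b ∧ D.plusGraph.Adj a b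

/-- The tree vertex at which a vertex of `G1 + G2` lives. -/
def site (D : TreeAmalgData G1 G2) : D.PlusV → D.VT1 ⊕ D.VT2
  | Sum.inl p => Sum.inl p.1
  | Sum.inr q => Sum.inr q.1

/-- The set of tree vertices hosting representatives of `x`; the identification size of `x`
is the number of its elements. -/
def support (D : TreeAmalgData G1 G2) (x : D.AmalgV) : Set (D.VT1 ⊕ D.VT2) :=
  {t | ∃ p, D.toAmalg p = x ∧ D.site p = t}

/-- Every vertex of `G1 ∗_T G2` has finite identification size. -/
def FiniteIdentification (D : TreeAmalgData G1 G2) : Prop :=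
  ∀ x : D.AmalgV, (D.support x).Finite

/-- All adhesion sets are finite. -/
def FiniteAdhesion (D : TreeAmalgData G1 G2) : Prop :=
  (∀ k, (D.S1 k).Finite) ∧ ∀ l, (D.S2 l).Finite

/-- The tree amalgamation is trivial: the contraction map restricts to a bijection on some
copy of `G1` or of `G2`. -/
def IsTrivial (D : TreeAmalgData G1 G2) : Prop :=
  (∃ a : D.VT1, Function.Bijective fun x : V1 => D.toAmalg (Sum.inl (a, x))) ∨
  ∃ b : D.VT2, Function.Bijective fun y : V2 => D.toAmalg (Sum.inr (b, y))

end TreeAmalgData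

/-- Some group of automorphisms of `G` acts with finitely many orbits on the vertices of `G`
and with finitely many orbits on the family `S` of adhesion sets of `G`. -/
def GoodAction {V : Type u} (G : SimpleGraph V) {K : Type u} (S : K → Set V) : Prop :=
  ∃ Γ : Subgroup (G ≃g G),
    (∃ s : Set V, s.Finite ∧ ∀ v : V, ∃ u ∈ s, ∃ g ∈ Γ, g u = v) ∧
    ∃ I : Set K, I.Finite ∧ ∀ k : K, ∃ k' ∈ I, ∃ g ∈ Γ, ⇑g '' S k' = S k

/-- A bundled graph. -/
structure BGraph : Type (u + 1) where
  V : Type u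
  G : SimpleGraph V

/-- `Z` is (isomorphic to) a tree amalgamation of `X` and `Y` of finite adhesion and finite
identification. -/
def AmalgStep (X Y Z : BGraph.{u}) : Prop :=
  ∃ D : TreeAmalgData X.G Y.G,
    D.FiniteAdhesion ∧ D.FiniteIdentification ∧ Nonempty (Z.G ≃g D.amalgGraph)

/-- `Z` is (isomorphic to) a tree amalgamation of `X` and `Y` of finite adhesion and finite
identification such that some group of automorphisms of each factor acts with finitely many
orbits on that factor and on the set of its adhesion sets. -/
def GoodAmalgStep (X Y Z : BGraph.{u}) : Prop :=
  ∃ D : TreeAmalgData X.G Y.G,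
    D.FiniteAdhesion ∧ D.FiniteIdentification ∧
    GoodAction X.G D.S1 ∧ GoodAction Y.G D.S2 ∧ Nonempty (Z.G ≃g D.amalgGraph)

/-- `Z` is obtained from the list `l` of graphs by iterated tree amalgamations of finite
adhesion and finite identification. -/
inductive IterAmalg : BGraph.{u} → List BGraph.{u} → Prop
  | single (X : BGraph) : IterAmalg X [X]
  | step {X Y Z : BGraph} {l1 l2 : List BGraph} :
      IterAmalg X l1 → IterAmalg Y l2 → AmalgStep X Y Z → IterAmalg Z (l1 ++ l2)

/-- `Z` is obtained from the list `l` of graphs by iterated tree amalgamations of finite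
adhesion and finite identification with quasi-transitive actions on the factors and their
adhesion sets. -/
inductive GoodIterAmalg : BGraph.{u} → List BGraph.{u} → Prop
  | single (X : BGraph) : GoodIterAmalg X [X]
  | step {X Y Z : BGraph} {l1 l2 : List BGraph} :
      GoodIterAmalg X l1 → GoodIterAmalg Y l2 → GoodAmalgStep X Y Z →
        GoodIterAmalg Z (l1 ++ l2)

/-- `l` is a factorisation of the graph `Gb`. -/
def IsFactorisation (Gb : BGraph.{u}) (l : List BGraph.{u}) : Prop :=
  (∀ X ∈ l, X.G.Connected ∧ LocallyFiniteGraph X.G ∧ QuasiTransitive X.G) ∧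
    GoodIterAmalg Gb l

/-- A factorisation is terminal if every factor has at most one end. -/
def IsTerminal (l : List BGraph.{u}) : Prop := ∀ X ∈ l, Subsingleton X.G.end


theorem dist_lip {V : Type u} {W : Type v} {G : SimpleGraph V} {H : SimpleGraph W}
    (hG : G.Connected) (hH : H.Connected) (f : V → W) (L : ℕ)
    (hf : ∀ u v, G.Adj u v → H.dist (f u) (f v) ≤ L) (u v : V) :
    H.dist (f u) (f v) ≤ L * G.dist u v := by
  obtain ⟨p, hp⟩ := hG.exists_walk_length_eq_dist u v
  rw [← hp]
  clear hp
  induction p with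
  | nil => simp
  | @cons a b c h p ih =>
    have h1 := hf _ _ h
    have h2 := hH.dist_triangle (u := f a) (v := f b) (w := f c)
    simp only [Walk.length_cons]
    nlinarith

theorem quasiIsometric_of_maps {V : Type u} {W : Type v} {G : SimpleGraph V} {H : SimpleGraph W}
    (hG : G.Connected) (hH : H.Connected) (f : V → W) (g : W → V) (L C : ℕ)
    (hf : ∀ u v, G.Adj u v → H.dist (f u) (f v) ≤ L)
    (hg : ∀ u v, H.Adj u v → G.dist (g u) (g v) ≤ L)
    (hgf : ∀ v, G.dist (g (f v)) v ≤ C) (hfg : ∀ w, H.dist (f (g w)) w ≤ C) :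
    QuasiIsometric G H := by
  refine ⟨(L : ℝ) + 1, 2 * (C : ℝ), f, by simp, by positivity, ?_, ?_⟩
  · intro u v
    have h1 := dist_lip hG hH f L hf u v
    have h2 := dist_lip hH hG g L hg (f u) (f v)
    have h3 := hG.dist_triangle (u := u) (v := g (f u)) (w := v)
    have h4 := hG.dist_triangle (u := g (f u)) (v := g (f v)) (w := v)
    have h5 := hgf u
    have h6 := hgf v
    rw [dist_comm] at h5
    have h7 : G.dist u v ≤ L * H.dist (f u) (f v) + 2 * C := by omega
    have h7' : (G.dist u v : ℝ) ≤ L * H.dist (f u) (f v) + 2 * C := by exact_mod_cast h7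
    have h1' : (H.dist (f u) (f v) : ℝ) ≤ L * G.dist u v := by exact_mod_cast h1
    have hL : (0 : ℝ) ≤ L := by positivity
    have hC : (0 : ℝ) ≤ C := by positivity
    have hd : (0 : ℝ) ≤ G.dist u v := by positivity
    have hd' : (0 : ℝ) ≤ H.dist (f u) (f v) := by positivity
    constructor
    · rw [sub_le_iff_le_add, inv_mul_le_iff₀ (by positivity)]
      nlinarith [mul_nonneg hL hC]
    · nlinarith
  · intro w
    refine ⟨g w, ?_⟩
    have := hfg w
    rw [dist_comm] at this
    have h : (H.dist w (f (g w)) : ℝ) ≤ C := by exact_mod_cast this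
    have hC : (0 : ℝ) ≤ C := by positivity
    linarith

theorem iso_dist {V : Type u} {W : Type v} {G : SimpleGraph V} {H : SimpleGraph W}
    (hG : G.Connected) (e : G ≃g H) (u v : V) : H.dist (e u) (e v) = G.dist u v := by
  have hH : H.Connected := e.connected_iff.1 hG
  apply le_antisymm
  · have := dist_lip hG hH e 1 (fun u v h => (dist_eq_one_iff_adj.2 (e.map_adj_iff.2 h)).le) u v
    simpa using this
  · have := dist_lip hH hG e.symm 1
      (fun u v h => (dist_eq_one_iff_adj.2 (e.symm.map_adj_iff.2 h)).le) (e u) (e v)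
    simpa using this

theorem QuasiIsometric.of_iso {V : Type u} {V' : Type u} {W : Type v} {G : SimpleGraph V}
    {G' : SimpleGraph V'} {H : SimpleGraph W}
    (hG : G.Connected) (e : G ≃g G') (h : QuasiIsometric G' H) : QuasiIsometric G H := by
  obtain ⟨γ, c, f, h1, h2, h3, h4⟩ := h
  refine ⟨γ, c, f ∘ e, h1, h2, ?_, ?_⟩
  · intro u v
    have := h3 (e u) (e v)
    rwa [iso_dist hG e] at this
  · intro w
    obtain ⟨x, hx⟩ := h4 w
    exact ⟨e.symm x, by simpa using hx⟩

theorem LocallyFiniteGraph.of_iso {V : Type u} {W : Type v} {G : SimpleGraph V} {H : SimpleGraph W}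
    (e : G ≃g H) (h : LocallyFiniteGraph G) : LocallyFiniteGraph H := by
  intro w
  refine ((h (e.symm w)).image e).subset ?_
  intro x hx
  refine ⟨e.symm x, ?_, by simp⟩
  exact e.symm.map_adj_iff.2 hx

theorem QuasiTransitive.of_iso {V : Type u} {W : Type v} {G : SimpleGraph V} {H : SimpleGraph W}
    (e : G ≃g H) (h : QuasiTransitive G) : QuasiTransitive H := by
  obtain ⟨s, hs, h⟩ := h
  refine ⟨e '' s, hs.image _, fun w => ?_⟩
  obtain ⟨u, hu, g, hg⟩ := h (e.symm w)
  refine ⟨e u, ⟨u, hu, rfl⟩, (e.symm.trans g).trans e, ?_⟩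
  simp [hg]

/-- closed balls -/
def cball {V : Type u} (G : SimpleGraph V) (u : V) (r : ℕ) : Set V := {v | G.dist u v ≤ r}

theorem dist_succ_cases {V : Type u} {G : SimpleGraph V} (hG : G.Connected) {u v : V} {r : ℕ}
    (h : G.dist u v = r + 1) : ∃ w, G.dist u w = r ∧ G.Adj w v := by
  obtain ⟨p, hp⟩ := hG.exists_walk_length_eq_dist v u
  cases p with
  | nil => simp at h
  | @cons _ b _ hadj p =>
    refine ⟨b, ?_, hadj.symm⟩
    have h1 := G.dist_le p
    simp only [Walk.length_cons] at hp
    have h2 := hG.dist_triangle (u := v) (v := b) (w := u)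
    rw [dist_eq_one_iff_adj.2 hadj] at h2
    rw [dist_comm] at h
    rw [dist_comm]
    omega

theorem cball_finite {V : Type u} {G : SimpleGraph V} (hG : G.Connected)
    (hl : LocallyFiniteGraph G) (u : V) (r : ℕ) : (cball G u r).Finite := by
  induction r with
  | zero =>
    refine (Set.finite_singleton u).subset ?_
    intro v hv
    have : G.dist u v = 0 := by simpa [cball] using hv
    simpa using ((hG.dist_eq_zero_iff).1 this).symm
  | succ r ih =>
    refine (ih.union (ih.biUnion fun v _ => hl v)).subset ?_
    intro v hv
    have hv : G.dist u v ≤ r + 1 := hv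
    rcases Nat.lt_or_ge (G.dist u v) (r + 1) with h | h
    · left; exact Nat.lt_succ_iff.1 h
    · right
      obtain ⟨w, hw, hadj⟩ := dist_succ_cases hG (le_antisymm hv h)
      simp only [Set.mem_iUnion]
      exact ⟨w, hw.le, hadj⟩

theorem cball_ncard_iso {V : Type u} {W : Type v} {G : SimpleGraph V} {H : SimpleGraph W}
    (hG : G.Connected) (e : G ≃g H) (u : V) (r : ℕ) :
    (cball H (e u) r).ncard = (cball G u r).ncard := by
  have : cball H (e u) r = e '' cball G u r := by
    ext w
    constructor
    · intro hw
      refine ⟨e.symm w, ?_, by simp⟩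
      have : H.dist (e u) w ≤ r := hw
      have h2 := iso_dist hG e u (e.symm w)
      simp only [RelIso.apply_symm_apply] at h2
      show G.dist u (e.symm w) ≤ r
      omega
    · rintro ⟨v, hv, rfl⟩
      show H.dist _ _ ≤ r
      rw [iso_dist hG e]; exact hv
  rw [this, Set.ncard_image_of_injective _ e.injective]

theorem cball_bound {V : Type u} {G : SimpleGraph V} (hG : G.Connected)
    (hq : QuasiTransitive G) (r : ℕ) : ∃ B, ∀ u, (cball G u r).ncard ≤ B := by
  obtain ⟨s, hs, h⟩ := hq
  obtain ⟨B, hB⟩ := (hs.image fun u => (cball G u r).ncard).bddAbove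
  refine ⟨B, fun v => ?_⟩
  obtain ⟨u, hu, g, rfl⟩ := h v
  rw [cball_ncard_iso hG]
  exact hB ⟨u, hu, rfl⟩

theorem exists_vertex_at_dist {V : Type u} {G : SimpleGraph V} (hG : G.Connected)
    (hl : LocallyFiniteGraph G) [Infinite V] (u : V) (r : ℕ) : ∃ v, G.dist u v = r := by
  have h1 : ∃ v, r ≤ G.dist u v := by
    by_contra hcon
    push Not at hcon
    exact Set.infinite_univ ((cball_finite hG hl u r).subset fun v _ => (hcon v).le)
  obtain ⟨v, hv⟩ := h1
  obtain ⟨k, hk⟩ := Nat.exists_eq_add_of_le hv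
  induction k generalizing v with
  | zero => exact ⟨v, hk⟩
  | succ k ih =>
    obtain ⟨w, hw, -⟩ := dist_succ_cases hG (r := r + k) hk
    exact ih w (by omega) hw

/-- a vertex at bounded distance outside a small finite set. -/
theorem exists_near_not_mem {V : Type u} {G : SimpleGraph V} (hG : G.Connected)
    (hl : LocallyFiniteGraph G) [Infinite V] (u : V) (n : ℕ) (S : Set V) (hS : S.Finite)
    (hn : S.ncard ≤ n) : ∃ v, G.dist u v ≤ n ∧ v ∉ S := by
  by_contra hcon
  push Not at hcon
  choose t ht using exists_vertex_at_dist hG hl u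
  have hinj : Function.Injective t := fun i j h => by rw [← ht i, ← ht j, h]
  have h1 : t '' (Finset.range (n + 1) : Set ℕ) ⊆ S := by
    rintro _ ⟨i, hi, rfl⟩
    apply hcon
    rw [ht]
    simp at hi
    omega
  have h2 := Set.ncard_le_ncard h1 hS
  rw [Set.ncard_image_of_injective _ hinj, Set.ncard_coe_finset] at h2
  simp at h2
  omega

/-- A graph given by a parent function with depth is a tree. -/
theorem isTree_of_parent {X : Type u} (G : SimpleGraph X) (r : X) (P : X → X) (ε : X → ℕ)
    (hε : ∀ c, c ≠ r → ε c = ε (P c) + 1)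
    (hadj : ∀ a b, G.Adj a b ↔ (b ≠ r ∧ P b = a) ∨ (a ≠ r ∧ P a = b)) : G.IsTree := by
  have hreach : ∀ n c, ε c = n → G.Reachable c r := by
    intro n
    induction n with
    | zero =>
      intro c hc
      by_cases h : c = r
      · subst h; exact Reachable.refl _
      · have := hε c h; omega
    | succ n ih =>
      intro c hc
      by_cases h : c = r
      · subst h; exact Reachable.refl _
      · have h1 := hε c h
        have : G.Adj c (P c) := (hadj _ _).2 (Or.inr ⟨h, rfl⟩)
        exact this.reachable.trans (ih _ (by omega))
  refine ⟨(connected_iff _).2 ⟨fun a b => (hreach _ a rfl).trans (hreach _ b rfl).symm, ⟨r⟩⟩, ?_⟩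
  rw [isAcyclic_iff_forall_adj_isBridge]
  have key : ∀ x, x ≠ r → ¬ (G \ fromEdgeSet {s(x, P x)}).Reachable x (P x) := by
    intro x hx hr
    -- descendants of x, via chains of non-root parents
    let Desc : X → Prop := fun y => ∃ l : ℕ, ∃ f : ℕ → X, f 0 = y ∧ f l = x ∧
      ∀ i < l, f i ≠ r ∧ P (f i) = f (i + 1)
    have hdown : ∀ y, y ≠ r → Desc (P y) → Desc y := by
      rintro y hy ⟨l, f, h0, h1, h2⟩
      refine ⟨l + 1, fun i => if i = 0 then y else f (i - 1), by simp, by simpa using h1, ?_⟩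
      intro i hi
      rcases i with _ | i
      · simp [hy, h0]
      · simpa using h2 i (by omega)
    have hup : ∀ y, y ≠ x → Desc y → y ≠ r ∧ Desc (P y) := by
      rintro y hy ⟨l, f, h0, h1, h2⟩
      rcases l with _ | l
      · exact absurd (h0.symm.trans h1) hy
      · have := h2 0 (by omega)
        rw [h0] at this
        refine ⟨this.1, l, fun i => f (i + 1), by simp [this.2], h1, fun i hi => h2 (i + 1) (by omega)⟩
    have hself : Desc x := ⟨0, fun _ => x, rfl, rfl, by simp⟩
    have hdepth : ∀ y, Desc y → ε x ≤ ε y := by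
      rintro y ⟨l, f, h0, h1, h2⟩
      have : ∀ i ≤ l, ε (f i) ≤ ε y := by
        intro i
        induction i with
        | zero => intro _; rw [h0]
        | succ i ih =>
          intro hi
          have h3 := h2 i (by omega)
          have h4 := hε _ h3.1
          rw [h3.2] at h4
          have := ih (by omega)
          omega
      rw [← h1]; exact this l le_rfl
    have hstep : ∀ a b, (G \ fromEdgeSet {s(x, P x)}).Adj a b → Desc a → Desc b := by
      intro a b hab ha
      rw [sdiff_adj, fromEdgeSet_adj, hadj] at hab
      obtain ⟨h | h, h'⟩ := hab
      · obtain ⟨h1, rfl⟩ := h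
        exact hdown b h1 ha
      · obtain ⟨h1, rfl⟩ := h
        have hne : a ≠ x := by
          rintro rfl
          apply h'
          refine ⟨by simp, ?_⟩
          intro h2
          have := hε a h1
          rw [← h2] at this
          omega
        exact (hup a hne ha).2
    have : Desc (P x) := by
      obtain ⟨p⟩ := hr
      have : ∀ a b (p : (G \ fromEdgeSet {s(x, P x)}).Walk a b), Desc a → Desc b := by
        intro a b p
        induction p with
        | nil => exact id
        | cons h p ih => exact fun ha => ih (hstep _ _ h ha)
      exact this _ _ p hself
    have h1 := hdepth _ this
    have := hε x hx
    omega
  intro a b hab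
  rw [isBridge_iff]
  rcases (hadj a b).1 hab with h | h
  · obtain ⟨h1, rfl⟩ := h
    intro hr
    rw [Sym2.eq_swap] at hr
    exact key b h1 hr.symm
  · obtain ⟨h1, rfl⟩ := h
    exact key a h1


/-- copies displaced from their original place, generated from a base by a step function -/
inductive DispP {X : Type u} (base : X → Prop) (step : X → X) : X → Prop
  | base (c : X) : base c → DispP base step c
  | step (c : X) : DispP base step c → DispP base step (step c)

/-- `c` stays at its original place -/
def PlaceU {X : Type u} {Z : Type v} (gp : X → X) (α : X → Z) (P : X → X) (σ : X → Z)
    (c : X) : Prop := P c = gp c ∧ σ c = α c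

/-- `c` is displaced to a free sibling -/
def PlaceC {X : Type u} {Z : Type v} {m : ℕ} (a0 : X) (gp : X → X) (α : X → Z)
    (s φ : X → Fin m → Z) (P : X → X) (σ : X → Z) (c : X) : Prop :=
  P c ≠ a0 ∧ PlaceU gp α P σ (P c) ∧ gp (P c) = gp c ∧
    (∃ i, α c = s (gp c) i ∧ α (P c) = φ (gp c) i) ∧ ∃ j, σ c = s (P c) j

theorem exists_injOn_fin {X : Type u} (m : ℕ) (S : Set X) (hS : S.Finite)
    (hc : S.ncard ≤ m + 1) : ∃ f : X → Fin (m + 1), Set.InjOn f S := by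
  classical
  have := hS.fintype
  have : Fintype.card S ≤ Fintype.card (Fin (m + 1)) := by
    rw [Fintype.card_fin, ← Nat.card_eq_fintype_card]; exact hc
  obtain ⟨f⟩ := Function.Embedding.nonempty_of_card_le this
  refine ⟨fun x => if h : x ∈ S then f ⟨x, h⟩ else 0, ?_⟩
  intro x hx y hy hxy
  simp only [hx, hy, dif_pos] at hxy
  simpa using f.injective hxy

theorem exists_depth {X : Type u} (a0 : X) (P : X → X) (Φ : X → ℕ)
    (h : ∀ c, c ≠ a0 → Φ (P c) < Φ c) :
    ∃ ε : X → ℕ, ∀ c, c ≠ a0 → ε c = ε (P c) + 1 := by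
  classical
  have hex : ∀ n c, Φ c = n → ∃ k, P^[k] c = a0 := by
    intro n
    induction n using Nat.strong_induction_on with
    | _ n ih =>
      intro c hc
      by_cases hca : c = a0
      · exact ⟨0, hca⟩
      · obtain ⟨k, hk⟩ := ih _ (hc ▸ h c hca) (P c) rfl
        exact ⟨k + 1, hk⟩
  have hex' : ∀ c, ∃ k, P^[k] c = a0 := fun c => hex _ c rfl
  refine ⟨fun c => Nat.find (hex' c), fun c hc => ?_⟩
  rw [Nat.find_eq_iff]
  refine ⟨Nat.find_spec (hex' (P c)), ?_⟩
  intro n hn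
  rcases n with _ | n
  · exact hc
  · have hn' : n + 1 < Nat.find (hex' (P c)) + 1 := hn
    exact Nat.find_min (hex' (P c)) (by omega : n < _)

theorem reassign {X : Type u} {Z : Type v} (a0 : X) (gp : X → X) (α e : X → Z) (δ : X → ℕ) (D0 : ℕ)
    (hδ : ∀ c, c ≠ a0 → δ c = δ (gp c) + 2)
    (hsurj : ∀ a z, (a = a0 ∨ z ≠ e a) → ∃ c, c ≠ a0 ∧ gp c = a ∧ α c = z)
    (hfin : ∀ a z, {c | c ≠ a0 ∧ gp c = a ∧ α c = z}.Finite ∧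
      {c | c ≠ a0 ∧ gp c = a ∧ α c = z}.ncard ≤ D0)
    (s φ : X → Fin (2 * D0 + 1) → Z) (hφ : ∀ a, Function.Injective (φ a))
    (hs : ∀ a, Function.Injective (s a)) (hsφ : ∀ a i j, s a i ≠ φ a j)
    (hse : ∀ a i, s a i ≠ e a) (hφe : ∀ a i, φ a i ≠ e a) :
    ∃ (P : X → X) (σ : X → Z) (ε : X → ℕ),
      (∀ c, c ≠ a0 → (P c = a0 ∨ σ c ≠ e (P c))) ∧
      (∀ a z, (a = a0 ∨ z ≠ e a) → ∃ c, c ≠ a0 ∧ P c = a ∧ σ c = z) ∧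
      (∀ c c', c ≠ a0 → c' ≠ a0 → P c = P c' → σ c = σ c' → c = c') ∧
      (∀ c, c ≠ a0 → ε c = ε (P c) + 1) ∧
      (∀ c, c ≠ a0 → PlaceU gp α P σ c ∨
        (P c = gp c ∧ α c = e (gp c) ∧ ∃ j, σ c = s (P c) j) ∨
        PlaceC a0 gp α s φ P σ c ∨
        (P c ≠ a0 ∧ gp (P c) = gp c ∧ α (P c) = α c ∧ (∃ j, σ c = s (P c) j) ∧
          (PlaceU gp α P σ (P c) ∨ PlaceC a0 gp α s φ P σ (P c)))) := by
  classical
  have h0 : ∀ a z, ∃ c, (a = a0 ∨ z ≠ e a) → c ≠ a0 ∧ gp c = a ∧ α c = z := by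
    intro a z
    by_cases h : (a = a0 ∨ z ≠ e a)
    · obtain ⟨c, hc⟩ := hsurj a z h
      exact ⟨c, fun _ => hc⟩
    · exact ⟨a0, fun h' => absurd h' h⟩
  choose o ho using h0
  let B : X → Prop := fun c => gp c ≠ a0 ∧ α c = e (gp c)
  let near : X → Prop := fun c => ∃ i, s (gp c) i = α c
  let T : X → X := fun c => if B c then gp c else if c ≠ o (gp c) (α c) then o (gp c) (α c)
    else if h : near c then o (gp c) (φ (gp c) h.choose) else c
  have hTB : ∀ c, B c → T c = gp c := fun c h => by simp only [T, if_pos h]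
  have hTN : ∀ c, ¬ B c → c ≠ o (gp c) (α c) → T c = o (gp c) (α c) := fun c h h' => by
    simp only [T, if_neg h, if_pos h']
  have hTC : ∀ c i, ¬ B c → c = o (gp c) (α c) → s (gp c) i = α c →
      T c = o (gp c) (φ (gp c) i) := fun c i h h' h'' => by
    have hn : near c := ⟨i, h''⟩
    have : hn.choose = i := hs _ (hn.choose_spec.trans h''.symm)
    simp only [T, if_neg h, ← h', ne_eq, not_true_eq_false, if_false, dif_pos hn, this]
  let Q : X → Prop := fun c => c ≠ a0 ∧ (B c ∨ c ≠ o (gp c) (α c) ∨ near c)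
  have hslotB : ∀ c, ¬ B c → (gp c = a0 ∨ α c ≠ e (gp c)) := by
    intro c h
    by_contra h'
    push Not at h'
    exact h h'
  -- fibres of T on Q
  have hfib : ∀ a, ∃ f : X → Fin (2 * D0 + 1), Set.InjOn f {c | Q c ∧ T c = a} := by
    intro a
    let S1 : Set X := {c | c ≠ a0 ∧ gp c = a ∧ α c = e a}
    let S2 : Set X := {c | c ≠ a0 ∧ gp c = gp a ∧ α c = α a}
    let S3 : Set X := {c | ∃ i, c = o (gp a) (s (gp a) i) ∧ α a = φ (gp a) i}
    have hS3 : S3.Subsingleton := by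
      rintro c ⟨i, rfl, hi⟩ c' ⟨j, rfl, hj⟩
      rw [hφ _ (hi.symm.trans hj)]
    have hsub : {c | Q c ∧ T c = a} ⊆ (S1 ∪ S2) ∪ S3 := by
      rintro c ⟨⟨hc, hQ⟩, hT⟩
      by_cases hB : B c
      · left; left
        rw [hTB c hB] at hT
        exact ⟨hc, hT, hT ▸ hB.2⟩
      by_cases hN : c ≠ o (gp c) (α c)
      · left; right
        rw [hTN c hB hN] at hT
        obtain ⟨h1, h2, h3⟩ := ho _ _ (hslotB c hB)
        rw [hT] at h2 h3
        exact ⟨hc, h2.symm, h3.symm⟩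
      · right
        obtain ⟨i, hi⟩ : near c := by tauto
        push Not at hN
        rw [hTC c i hB hN hi] at hT
        obtain ⟨h1, h2, h3⟩ := ho (gp c) (φ (gp c) i) (Or.inr (hφe _ _))
        rw [hT] at h2 h3
        refine ⟨i, ?_, ?_⟩
        · rw [h2, hi]; exact hN
        · rw [h2]; exact h3
    have hfinU : ((S1 ∪ S2) ∪ S3).Finite :=
      ((hfin a (e a)).1.union (hfin (gp a) (α a)).1).union hS3.finite
    refine exists_injOn_fin _ _ (hfinU.subset hsub) ?_
    have h1 := Set.ncard_le_ncard hsub hfinU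
    have h2 := Set.ncard_union_le (S1 ∪ S2) S3
    have h3 := Set.ncard_union_le S1 S2
    have h4 : S1.ncard ≤ D0 := (hfin a (e a)).2
    have h5 : S2.ncard ≤ D0 := (hfin (gp a) (α a)).2
    have h6 : S3.ncard ≤ 1 := by
      rw [Set.ncard_le_one hS3.finite]
      exact fun a ha b hb => hS3 ha hb
    omega
  choose J hJ using hfib
  let t : X → Z := fun c => s (T c) (J (T c) c)
  have hinj : ∀ c c', Q c → Q c' → T c = T c' → t c = t c' → c = c' := by
    intro c c' hc hc' h1 h2
    have h3 : J (T c) c = J (T c) c' := by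
      have h2 : s (T c) (J (T c) c) = s (T c') (J (T c') c') := h2
      rw [← h1] at h2
      exact hs _ h2
    exact hJ (T c) ⟨hc, rfl⟩ ⟨hc', h1.symm⟩ h3
  let base : X → Prop := fun c => c ≠ a0 ∧ (B c ∨ c ≠ o (gp c) (α c))
  let step : X → X := fun c => o (T c) (t c)
  let Disp := DispP base step
  have hstep : ∀ c, step c ≠ a0 ∧ gp (step c) = T c ∧ α (step c) = t c :=
    fun c => ho _ _ (Or.inr (hse _ _))
  have hDc : ∀ c, Disp c → base c ∨ ∃ c', Disp c' ∧ c = step c' := by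
    intro c h
    cases h with
    | base _ h => exact Or.inl h
    | step c' h => exact Or.inr ⟨c', h, rfl⟩
  have hDQ : ∀ c, Disp c → Q c := by
    intro c h
    rcases hDc c h with h | ⟨c', h, rfl⟩
    · exact ⟨h.1, by tauto⟩
    · obtain ⟨h1, h2, h3⟩ := hstep c'
      refine ⟨h1, Or.inr (Or.inr ⟨J (T c') c', ?_⟩)⟩
      rw [h2, h3]
  have hDB : ∀ c, c ≠ a0 → ¬ Disp c → ¬ B c ∧ c = o (gp c) (α c) := by
    intro c hc h
    have : ¬ base c := fun h' => h (DispP.base c h')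
    refine ⟨fun h' => this ⟨hc, Or.inl h'⟩, ?_⟩
    by_contra h'
    exact this ⟨hc, Or.inr h'⟩
  have hDo : ∀ a z, (a = a0 ∨ z ≠ e a) → Disp (o a z) → ∃ c', Disp c' ∧ T c' = a ∧ t c' = z := by
    intro a z haz h
    obtain ⟨h1, h2, h3⟩ := ho a z haz
    rcases hDc _ h with ⟨-, h | h⟩ | ⟨c', h, h'⟩
    · obtain ⟨h4, h5⟩ : gp (o a z) ≠ a0 ∧ α (o a z) = e (gp (o a z)) := h
      rw [h2] at h4 h5
      rw [h3] at h5
      tauto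
    · rw [h2, h3] at h; exact absurd rfl h
    · obtain ⟨h4, h5, h6⟩ := hstep c'
      rw [← h'] at h5 h6
      exact ⟨c', h, h5.symm.trans h2, h6.symm.trans h3⟩
  let P : X → X := fun c => if Disp c then T c else gp c
  let σ : X → Z := fun c => if Disp c then t c else α c
  have hP1 : ∀ c, Disp c → P c = T c := fun c h => if_pos h
  have hP2 : ∀ c, ¬ Disp c → P c = gp c := fun c h => if_neg h
  have hσ1 : ∀ c, Disp c → σ c = t c := fun c h => if_pos h
  have hσ2 : ∀ c, ¬ Disp c → σ c = α c := fun c h => if_neg h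
  -- primary copies in free slots are never displaced
  have hfree : ∀ a i, ¬ Disp (o a (φ a i)) := by
    intro a i h
    obtain ⟨c', -, h1, h2⟩ := hDo a (φ a i) (Or.inr (hφe _ _)) h
    have h2 : s (T c') (J (T c') c') = φ a i := h2
    rw [h1] at h2
    exact hsφ _ _ _ h2
  let Φ : X → ℕ := fun c => 3 * δ c + (if c ≠ o (gp c) (α c) then 2 else if near c then 1 else 0)
  have hΦ2 : ∀ c, Φ c ≤ 3 * δ c + 2 := by
    intro c; simp only [Φ]; split_ifs <;> omega
  have hΦ0 : ∀ c, 3 * δ c ≤ Φ c := by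
    intro c; simp only [Φ]; omega
  have hΦP : ∀ c, c ≠ a0 → Φ (P c) < Φ c := by
    intro c hc
    have hgpcase : Φ (gp c) < Φ c := by
      have h1 := hΦ2 (gp c)
      have h2 := hΦ0 c
      have h3 := hδ c hc
      omega
    by_cases hD : Disp c
    · rw [hP1 c hD]
      by_cases hB : B c
      · rw [hTB c hB]; exact hgpcase
      by_cases hN : c ≠ o (gp c) (α c)
      · rw [hTN c hB hN]
        obtain ⟨h1, h2, h3⟩ := ho _ _ (hslotB c hB)
        have h4 := hδ _ h1
        have h5 := hδ c hc
        rw [h2] at h4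
        have h6 : Φ (o (gp c) (α c)) ≤ 3 * δ (o (gp c) (α c)) + 1 := by
          have hno : ¬ (o (gp c) (α c) ≠ o (gp (o (gp c) (α c))) (α (o (gp c) (α c)))) := by
            rw [h2, h3]; simp
          simp only [Φ, if_neg hno]
          split_ifs <;> omega
        have h7 : Φ c = 3 * δ c + 2 := by
          simp only [Φ, if_pos hN]
        omega
      · obtain ⟨i, hi⟩ : near c := by
          have := (hDQ c hD).2
          tauto
        push Not at hN
        rw [hTC c i hB hN hi]
        obtain ⟨h1, h2, h3⟩ := ho (gp c) (φ (gp c) i) (Or.inr (hφe _ _))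
        have h4 := hδ _ h1
        have h5 := hδ c hc
        rw [h2] at h4
        have h6 : Φ (o (gp c) (φ (gp c) i)) = 3 * δ (o (gp c) (φ (gp c) i)) := by
          have hnn : ¬ near (o (gp c) (φ (gp c) i)) := by
            rintro ⟨j, hj⟩
            rw [h2, h3] at hj
            exact hsφ _ _ _ hj
          have hno : ¬ (o (gp c) (φ (gp c) i) ≠ o (gp (o (gp c) (φ (gp c) i)))
              (α (o (gp c) (φ (gp c) i)))) := by
            rw [h2, h3]; simp
          simp only [Φ, if_neg hno, if_neg hnn, add_zero]
        have h7 : Φ c = 3 * δ c + 1 := by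
          have hn : near c := ⟨i, hi⟩
          have hn2 : ¬ (c ≠ o (gp c) (α c)) := fun h => h hN
          simp only [Φ, if_neg hn2, if_pos hn]
        omega
    · rw [hP2 c hD]; exact hgpcase
  obtain ⟨ε, hε⟩ := exists_depth a0 P Φ hΦP
  have hCplace : ∀ c, c ≠ a0 → Disp c → ¬ B c → c = o (gp c) (α c) →
      PlaceC a0 gp α s φ P σ c := by
    intro c hc hD hB hN
    obtain ⟨i, hi⟩ : near c := by
      have := (hDQ c hD).2
      tauto
    have hP := (hP1 c hD).trans (hTC c i hB hN hi)
    obtain ⟨h1, h2, h3⟩ := ho (gp c) (φ (gp c) i) (Or.inr (hφe _ _))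
    refine ⟨?_, ⟨?_, ?_⟩, ?_, ⟨i, hi.symm, ?_⟩, ⟨J (T c) c, ?_⟩⟩
    · rw [hP]; exact h1
    · rw [hP]; exact hP2 _ (hfree _ _)
    · rw [hP]; exact hσ2 _ (hfree _ _)
    · rw [hP, h2]
    · rw [hP, h3]
    · rw [hσ1 c hD, hP1 c hD]
  have hprim : ∀ c, c ≠ a0 → ¬ B c → c = o (gp c) (α c) →
      PlaceU gp α P σ c ∨ PlaceC a0 gp α s φ P σ c := by
    intro c hc hB hN
    by_cases hD : Disp c
    · exact Or.inr (hCplace c hc hD hB hN)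
    · exact Or.inl ⟨hP2 c hD, hσ2 c hD⟩
  refine ⟨P, σ, ε, ?_, ?_, ?_, hε, ?_⟩
  · intro c hc
    by_cases hD : Disp c
    · right
      rw [hP1 c hD, hσ1 c hD]
      exact hse _ _
    · rw [hP2 c hD, hσ2 c hD]
      exact hslotB c (hDB c hc hD).1
  · intro a z haz
    by_cases h : ∃ c', Disp c' ∧ T c' = a ∧ t c' = z
    · obtain ⟨c', hD, h1, h2⟩ := h
      exact ⟨c', (hDQ c' hD).1, (hP1 c' hD).trans h1, (hσ1 c' hD).trans h2⟩
    · have hD : ¬ Disp (o a z) := fun h' => h (hDo a z haz h')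
      obtain ⟨h1, h2, h3⟩ := ho a z haz
      exact ⟨o a z, h1, (hP2 _ hD).trans h2, (hσ2 _ hD).trans h3⟩
  · have haux : ∀ c c', c ≠ a0 → c' ≠ a0 → Disp c → ¬ Disp c' → P c = P c' → σ c = σ c' → False := by
      intro c c' hc hc' hD hD' h1 h2
      rw [hP1 c hD, hP2 c' hD'] at h1
      rw [hσ1 c hD, hσ2 c' hD'] at h2
      apply hD'
      have h3 := (hDB c' hc' hD').2
      rw [← h1, ← h2] at h3
      rw [h3]
      exact DispP.step c hD
    intro c c' hc hc' h1 h2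
    by_cases hD : Disp c <;> by_cases hD' : Disp c'
    · rw [hP1 c hD, hP1 c' hD'] at h1
      rw [hσ1 c hD, hσ1 c' hD'] at h2
      exact hinj c c' (hDQ c hD) (hDQ c' hD') h1 h2
    · exact (haux c c' hc hc' hD hD' h1 h2).elim
    · exact (haux c' c hc' hc hD' hD h1.symm h2.symm).elim
    · rw [hP2 c hD, hP2 c' hD'] at h1
      rw [hσ2 c hD, hσ2 c' hD'] at h2
      rw [(hDB c hc hD).2, (hDB c' hc' hD').2, h1, h2]
  · intro c hc
    by_cases hD : Disp c
    · by_cases hB : B c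
      · right; left
        rw [hP1 c hD, hTB c hB]
        refine ⟨rfl, hB.2, J (T c) c, ?_⟩
        rw [hσ1 c hD]
        show s (T c) _ = _
        rw [hTB c hB]
      · right; right
        by_cases hN : c ≠ o (gp c) (α c)
        · right
          obtain ⟨h1, h2, h3⟩ := ho _ _ (hslotB c hB)
          have hP := (hP1 c hD).trans (hTN c hB hN)
          refine ⟨?_, ?_, ?_, ⟨J (T c) c, ?_⟩, ?_⟩
          · rw [hP]; exact h1
          · rw [hP]; exact h2
          · rw [hP]; exact h3
          · rw [hσ1 c hD, hP1 c hD]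
          · rw [hP]
            refine hprim _ h1 ?_ ?_
            · rintro ⟨h4, h5⟩
              rw [h2] at h4 h5
              rw [h3] at h5
              exact hB ⟨h4, h5⟩
            · rw [h2, h3]
        · left
          push Not at hN
          exact hCplace c hc hD hB hN
    · left
      exact ⟨hP2 c hD, hσ2 c hD⟩


theorem tree_parent_unique {X : Type u} {T : SimpleGraph X} (hT : T.IsTree) (r v w w' : X)
    (h : T.Adj w v) (h' : T.Adj w' v) (hd : T.dist r v = T.dist r w + 1)
    (hd' : T.dist r v = T.dist r w' + 1) : w = w' := by
  obtain ⟨p, hp⟩ := hT.connected.exists_walk_length_eq_dist r w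
  obtain ⟨q, hq⟩ := hT.connected.exists_walk_length_eq_dist r w'
  have h1 : (p.concat h).IsPath := Walk.isPath_of_length_eq_dist _ (by rw [Walk.length_concat]; omega)
  have h2 : (q.concat h').IsPath := Walk.isPath_of_length_eq_dist _ (by rw [Walk.length_concat]; omega)
  have h3 : p.concat h = q.concat h' := by
    have := hT.IsAcyclic.path_unique ⟨_, h1⟩ ⟨_, h2⟩
    simpa using this
  have := congrArg Walk.penultimate h3
  simpa using this

namespace TreeAmalgData

/-- the tree of `D` rooted at a vertex of the first class, with total label functions -/
structure Rooted {V1 V2 : Type u} {G1 : SimpleGraph V1} {G2 : SimpleGraph V2}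
    (D : TreeAmalgData G1 G2) where
  a0 : D.VT1
  ph : D.VT1 → D.VT2
  pa : D.VT2 → D.VT1
  dep1 : D.VT1 → ℕ
  dep2 : D.VT2 → ℕ
  l1 : D.VT1 → D.VT2 → D.K1
  l2 : D.VT1 → D.VT2 → D.K2
  dep0 : dep1 a0 = 0
  ph_adj : ∀ a, a ≠ a0 → D.Tadj a (ph a)
  ph_dep : ∀ a, a ≠ a0 → dep1 a = dep2 (ph a) + 1
  pa_adj : ∀ b, D.Tadj (pa b) b
  pa_dep : ∀ b, dep2 b = dep1 (pa b) + 1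
  cases : ∀ a b, D.Tadj a b → (a ≠ a0 ∧ b = ph a) ∨ a = pa b
  l1_eq : ∀ a b (h : D.Tadj a b), l1 a b = D.lab1 a b h
  l2_eq : ∀ a b (h : D.Tadj a b), l2 a b = D.lab2 a b h
  ex : ∃ a, a ≠ a0
  two : ∀ a b, D.Tadj a b → ∃ a', a' ≠ a ∧ D.Tadj a' b

theorem bip_adj_lr {A B : Type u} (R : A → B → Prop) (a : A) (b : B) :
    (bipGraph R).Adj (Sum.inl a) (Sum.inr b) ↔ R a b := by
  simp [bipGraph]

theorem bip_adj_rl {A B : Type u} (R : A → B → Prop) (a : A) (b : B) :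
    (bipGraph R).Adj (Sum.inr b) (Sum.inl a) ↔ R a b := by
  simp [bipGraph]

theorem bip_adj_ll {A B : Type u} (R : A → B → Prop) (a a' : A) :
    ¬ (bipGraph R).Adj (Sum.inl a) (Sum.inl a') := by
  simp [bipGraph]

theorem bip_adj_rr {A B : Type u} (R : A → B → Prop) (b b' : B) :
    ¬ (bipGraph R).Adj (Sum.inr b) (Sum.inr b') := by
  simp [bipGraph]

theorem exists_rooted {V1 V2 : Type u} {G1 : SimpleGraph V1} {G2 : SimpleGraph V2}
    (D : TreeAmalgData G1 G2)
    (hstar : ∃ x y : D.VT1 ⊕ D.VT2, 2 < (bipGraph D.Tadj).dist x y) : Nonempty D.Rooted := by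
  classical
  set T := bipGraph D.Tadj with hTdef
  have hT : T.IsTree := D.isTree
  have hC := hT.connected
  obtain ⟨x, y, hxy⟩ := hstar
  obtain ⟨a0, b0, hab0⟩ : ∃ a b, D.Tadj a b := by
    obtain ⟨n, hn⟩ : ∃ n, T.dist x y = n + 1 := ⟨T.dist x y - 1, by omega⟩
    obtain ⟨w, -, hw⟩ := dist_succ_cases hC hn
    rcases w with a | b <;> rcases y with a' | b'
    · exact absurd hw (bip_adj_ll _ _ _)
    · exact ⟨_, _, (bip_adj_lr _ _ _).1 hw⟩
    · exact ⟨_, _, (bip_adj_rl _ _ _).1 hw⟩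
    · exact absurd hw (bip_adj_rr _ _ _)
  let dep : D.VT1 ⊕ D.VT2 → ℕ := fun t => T.dist (Sum.inl a0) t
  have hph : ∀ a, ∃ b, a ≠ a0 → D.Tadj a b ∧ dep (Sum.inl a) = dep (Sum.inr b) + 1 := by
    intro a
    by_cases h : a = a0
    · exact ⟨b0, fun h' => absurd h h'⟩
    have hpos : 0 < T.dist (Sum.inl a0) (Sum.inl a) :=
      hC.pos_dist_of_ne (fun h' => h (Sum.inl.inj h').symm)
    obtain ⟨n, hn⟩ : ∃ n, T.dist (Sum.inl a0) (Sum.inl a) = n + 1 :=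
      ⟨T.dist (Sum.inl a0) (Sum.inl a) - 1, by omega⟩
    obtain ⟨w, h1, hw⟩ := dist_succ_cases hC hn
    rcases w with a' | b
    · exact absurd hw (bip_adj_ll _ _ _)
    · exact ⟨b, fun _ => ⟨(bip_adj_rl _ _ _).1 hw, by simp only [dep]; omega⟩⟩
  have hpa : ∀ b, ∃ a, D.Tadj a b ∧ dep (Sum.inr b) = dep (Sum.inl a) + 1 := by
    intro b
    have hpos : 0 < T.dist (Sum.inl a0) (Sum.inr b) :=
      hC.pos_dist_of_ne (by simp)
    obtain ⟨n, hn⟩ : ∃ n, T.dist (Sum.inl a0) (Sum.inr b) = n + 1 :=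
      ⟨T.dist (Sum.inl a0) (Sum.inr b) - 1, by omega⟩
    obtain ⟨w, h1, hw⟩ := dist_succ_cases hC hn
    rcases w with a | b'
    · exact ⟨a, (bip_adj_lr _ _ _).1 hw, by simp only [dep]; omega⟩
    · exact absurd hw (bip_adj_rr _ _ _)
  choose ph hph using hph
  choose pa hpa using hpa
  have hcases : ∀ a b, D.Tadj a b → (a ≠ a0 ∧ b = ph a) ∨ a = pa b := by
    intro a b hab
    have hadj : T.Adj (Sum.inl a) (Sum.inr b) := (bip_adj_lr _ _ _).2 hab
    rcases hT.dist_eq_dist_add_one_of_adj (Sum.inl a0) hadj with h | h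
    · left
      have ha : a ≠ a0 := by
        rintro rfl
        simp at h
      refine ⟨ha, ?_⟩
      obtain ⟨h1, h2⟩ := hph a ha
      have := tree_parent_unique hT (Sum.inl a0) (Sum.inl a) (Sum.inr b) (Sum.inr (ph a))
        hadj.symm ((bip_adj_rl _ _ _).2 h1) h h2
      exact Sum.inr.inj this
    · right
      obtain ⟨h1, h2⟩ := hpa b
      have := tree_parent_unique hT (Sum.inl a0) (Sum.inr b) (Sum.inl a) (Sum.inl (pa b))
        hadj ((bip_adj_lr _ _ _).2 h1) h h2
      exact Sum.inl.inj this
  have hex : ∃ a, a ≠ a0 := by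
    by_contra hcon
    push Not at hcon
    have h1 : ∀ t : D.VT1 ⊕ D.VT2, T.dist t (Sum.inl a0) ≤ 1 := by
      intro t
      rcases t with a | b
      · rw [hcon a]; simp
      · obtain ⟨h1, -⟩ := hpa b
        rw [hcon (pa b)] at h1
        exact (dist_eq_one_iff_adj.2 ((bip_adj_rl _ _ _).2 h1)).le
    have h2 := hC.dist_triangle (u := x) (v := Sum.inl a0) (w := y)
    have h3 := h1 x
    have h4 := h1 y
    rw [dist_comm] at h4
    omega
  have htwo : ∃ l l' : D.K2, l ≠ l' := by
    obtain ⟨a, ha⟩ := hex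
    obtain ⟨h1, h2⟩ := hph a ha
    obtain ⟨h3, h4⟩ := hpa (ph a)
    refine ⟨D.lab2 a _ h1, D.lab2 _ _ h3, fun h => ?_⟩
    have := (D.lab2_bij (ph a)).1 (a₁ := ⟨a, h1⟩) (a₂ := ⟨_, h3⟩) h
    have h5 : a = pa (ph a) := congrArg Subtype.val this
    rw [← h5] at h4
    omega
  refine ⟨⟨a0, ph, pa, fun a => dep (Sum.inl a), fun b => dep (Sum.inr b),
    fun a b => if h : D.Tadj a b then D.lab1 a b h else D.lab1 a0 b0 hab0,
    fun a b => if h : D.Tadj a b then D.lab2 a b h else D.lab2 a0 b0 hab0,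
    by simp [dep], fun a ha => (hph a ha).1, fun a ha => (hph a ha).2, fun b => (hpa b).1,
    fun b => (hpa b).2, hcases, fun a b h => dif_pos h, fun a b h => dif_pos h, hex, ?_⟩⟩
  intro a b hab
  obtain ⟨l, l', hll⟩ := htwo
  obtain ⟨⟨c, hc⟩, hcl⟩ := (D.lab2_bij b).2 l
  obtain ⟨⟨c', hc'⟩, hcl'⟩ := (D.lab2_bij b).2 l'
  by_cases h : c = a
  · refine ⟨c', ?_, hc'⟩
    rintro rfl
    subst h
    exact hll (hcl.symm.trans hcl')
  · exact ⟨c, h, hc⟩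

end TreeAmalgData


namespace TreeAmalgData

section general
variable {V1 V2 : Type u} {G1 : SimpleGraph V1} {G2 : SimpleGraph V2}

theorem toAmalg_cross (D : TreeAmalgData G1 G2) {p : D.VT1 × V1} {q : D.VT2 × V2}
    (h : D.cross p q) : D.toAmalg (Sum.inl p) = D.toAmalg (Sum.inr q) :=
  Quot.sound ⟨p, q, rfl, rfl, h⟩

theorem toAmalg_surj (D : TreeAmalgData G1 G2) (v : D.AmalgV) : ∃ p, D.toAmalg p = v :=
  Quot.exists_rep v

theorem plus_adj_cases (D : TreeAmalgData G1 G2) {p q : D.PlusV} (h : D.plusGraph.Adj p q)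
    (hne : D.toAmalg p ≠ D.toAmalg q) :
    (∃ a x x', p = Sum.inl (a, x) ∧ q = Sum.inl (a, x') ∧ G1.Adj x x') ∨
    (∃ b y y', p = Sum.inr (b, y) ∧ q = Sum.inr (b, y') ∧ G2.Adj y y') := by
  rw [plusGraph, fromRel_adj] at h
  obtain ⟨-, h⟩ := h
  rcases p with ⟨a, x⟩ | ⟨b, y⟩ <;> rcases q with ⟨a', x'⟩ | ⟨b', y'⟩
  · left
    rcases h with ⟨h1, h2⟩ | ⟨h1, h2⟩
    · dsimp only at h1 h2; subst h1; exact ⟨a, x, x', rfl, rfl, h2⟩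
    · dsimp only at h1 h2; subst h1; exact ⟨_, x, x', rfl, rfl, h2.symm⟩
  · rcases h with h | h
    · exact absurd (D.toAmalg_cross h) hne
    · exact h.elim
  · rcases h with h | h
    · exact h.elim
    · exact absurd (D.toAmalg_cross h).symm hne
  · right
    rcases h with ⟨h1, h2⟩ | ⟨h1, h2⟩
    · dsimp only at h1 h2; subst h1; exact ⟨b, y, y', rfl, rfl, h2⟩
    · dsimp only at h1 h2; subst h1; exact ⟨_, y, y', rfl, rfl, h2.symm⟩

theorem amalg_adj_cases (D : TreeAmalgData G1 G2) {u v : D.AmalgV} (h : D.amalgGraph.Adj u v) :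
    (∃ a x x', u = D.toAmalg (Sum.inl (a, x)) ∧ v = D.toAmalg (Sum.inl (a, x')) ∧ G1.Adj x x') ∨
    (∃ b y y', u = D.toAmalg (Sum.inr (b, y)) ∧ v = D.toAmalg (Sum.inr (b, y')) ∧ G2.Adj y y') := by
  rw [amalgGraph, fromRel_adj] at h
  obtain ⟨hne, ⟨p, q, rfl, rfl, h⟩ | ⟨q, p, rfl, rfl, h⟩⟩ := h
  · rcases D.plus_adj_cases h hne with ⟨a, x, x', rfl, rfl, hh⟩ | ⟨a, x, x', rfl, rfl, hh⟩
    · exact Or.inl ⟨_, _, _, rfl, rfl, hh⟩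
    · exact Or.inr ⟨_, _, _, rfl, rfl, hh⟩
  · rcases D.plus_adj_cases h.symm hne with ⟨a, x, x', rfl, rfl, hh⟩ | ⟨a, x, x', rfl, rfl, hh⟩
    · exact Or.inl ⟨_, _, _, rfl, rfl, hh⟩
    · exact Or.inr ⟨_, _, _, rfl, rfl, hh⟩

theorem amalg_adj_inl (D : TreeAmalgData G1 G2) (a : D.VT1) {x x' : V1} (h : G1.Adj x x')
    (hne : D.toAmalg (Sum.inl (a, x)) ≠ D.toAmalg (Sum.inl (a, x'))) :
    D.amalgGraph.Adj (D.toAmalg (Sum.inl (a, x))) (D.toAmalg (Sum.inl (a, x'))) := by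
  rw [amalgGraph, fromRel_adj]
  refine ⟨hne, Or.inl ⟨_, _, rfl, rfl, ?_⟩⟩
  rw [plusGraph, fromRel_adj]
  exact ⟨fun h' => hne (by rw [h']), Or.inl ⟨rfl, h⟩⟩

theorem amalg_adj_inr (D : TreeAmalgData G1 G2) (b : D.VT2) {x x' : V2} (h : G2.Adj x x')
    (hne : D.toAmalg (Sum.inr (b, x)) ≠ D.toAmalg (Sum.inr (b, x'))) :
    D.amalgGraph.Adj (D.toAmalg (Sum.inr (b, x))) (D.toAmalg (Sum.inr (b, x'))) := by
  rw [amalgGraph, fromRel_adj]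
  refine ⟨hne, Or.inl ⟨_, _, rfl, rfl, ?_⟩⟩
  rw [plusGraph, fromRel_adj]
  exact ⟨fun h' => hne (by rw [h']), Or.inl ⟨rfl, h⟩⟩

theorem dist_inl_le (D : TreeAmalgData G1 G2) (hc1 : G1.Connected) (hA : D.amalgGraph.Connected)
    (a : D.VT1) (x x' : V1) :
    D.amalgGraph.dist (D.toAmalg (Sum.inl (a, x))) (D.toAmalg (Sum.inl (a, x'))) ≤ G1.dist x x' := by
  have := dist_lip hc1 hA (fun x => D.toAmalg (Sum.inl (a, x))) 1 (fun u v h => by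
    by_cases hne : D.toAmalg (Sum.inl (a, u)) = D.toAmalg (Sum.inl (a, v))
    · simp [hne]
    · exact (dist_eq_one_iff_adj.2 (D.amalg_adj_inl a h hne)).le) x x'
  simpa using this

theorem dist_inr_le (D : TreeAmalgData G1 G2) (hc2 : G2.Connected) (hA : D.amalgGraph.Connected)
    (b : D.VT2) (x x' : V2) :
    D.amalgGraph.dist (D.toAmalg (Sum.inr (b, x))) (D.toAmalg (Sum.inr (b, x'))) ≤ G2.dist x x' := by
  have := dist_lip hc2 hA (fun x => D.toAmalg (Sum.inr (b, x))) 1 (fun u v h => by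
    by_cases hne : D.toAmalg (Sum.inr (b, u)) = D.toAmalg (Sum.inr (b, v))
    · simp [hne]
    · exact (dist_eq_one_iff_adj.2 (D.amalg_adj_inr b h hne)).le) x x'
  simpa using this

end general

namespace Rooted
variable {V1 V2 : Type u} {G1 : SimpleGraph V1} {G2 : SimpleGraph V2} {D : TreeAmalgData G1 G2}

theorem cross_iff (R : D.Rooted) (p : D.VT1 × V1) (q : D.VT2 × V2) :
    D.cross p q ↔ D.Tadj p.1 q.1 ∧ p.2 ∈ D.S1 (R.l1 p.1 q.1) ∧
      q.2 = D.glue (R.l1 p.1 q.1) (R.l2 p.1 q.1) p.2 := by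
  constructor
  · rintro ⟨h, h1, h2⟩
    rw [R.l1_eq _ _ h, R.l2_eq _ _ h]
    exact ⟨h, h1, h2⟩
  · rintro ⟨h, h1, h2⟩
    rw [R.l1_eq _ _ h] at h1
    rw [R.l1_eq _ _ h, R.l2_eq _ _ h] at h2
    exact ⟨h, h1, h2⟩

theorem l1_inj (R : D.Rooted) {a : D.VT1} {b b' : D.VT2} (h : D.Tadj a b) (h' : D.Tadj a b')
    (hl : R.l1 a b = R.l1 a b') : b = b' := by
  rw [R.l1_eq _ _ h, R.l1_eq _ _ h'] at hl
  have := (D.lab1_bij a).1 (a₁ := ⟨b, h⟩) (a₂ := ⟨b', h'⟩) hl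
  exact congrArg Subtype.val this

theorem l1_surj (R : D.Rooted) (a : D.VT1) (k : D.K1) : ∃ b, D.Tadj a b ∧ R.l1 a b = k := by
  obtain ⟨⟨b, h⟩, hb⟩ := (D.lab1_bij a).2 k
  exact ⟨b, h, by rw [R.l1_eq _ _ h]; exact hb⟩

/-- label of the edge towards the root -/
def kE (R : D.Rooted) (a : D.VT1) : D.K1 := R.l1 a (R.ph a)

/-- depth -/
def dp (R : D.Rooted) : D.PlusV → ℕ
  | Sum.inl p => R.dep1 p.1
  | Sum.inr q => R.dep2 q.1

open Classical in
/-- one step towards the root inside an identification class -/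
noncomputable def up (R : D.Rooted) : D.PlusV → D.PlusV
  | Sum.inl p => if p.1 ≠ R.a0 ∧ p.2 ∈ D.S1 (R.kE p.1) then
      Sum.inr (R.ph p.1, D.glue (R.kE p.1) (R.l2 p.1 (R.ph p.1)) p.2) else Sum.inl p
  | Sum.inr q => if h : ∃ x ∈ D.S1 (R.l1 (R.pa q.1) q.1),
      D.glue (R.l1 (R.pa q.1) q.1) (R.l2 (R.pa q.1) q.1) x = q.2 then
      Sum.inl (R.pa q.1, h.choose) else Sum.inr q

theorem up_cases (R : D.Rooted) (p : D.PlusV) : R.up p = p ∨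
    (R.dp p = R.dp (R.up p) + 1 ∧
      ((∃ q r, p = Sum.inl q ∧ R.up p = Sum.inr r ∧ D.cross q r) ∨
       (∃ q r, p = Sum.inr r ∧ R.up p = Sum.inl q ∧ D.cross q r))) := by
  classical
  rcases p with p | q
  · by_cases h : p.1 ≠ R.a0 ∧ p.2 ∈ D.S1 (R.kE p.1)
    · right
      have hu : R.up (Sum.inl p) =
        Sum.inr (R.ph p.1, D.glue (R.kE p.1) (R.l2 p.1 (R.ph p.1)) p.2) := if_pos h
      refine ⟨?_, Or.inl ⟨_, _, rfl, hu, ?_⟩⟩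
      · rw [hu]; exact R.ph_dep _ h.1
      · rw [R.cross_iff]
        exact ⟨R.ph_adj _ h.1, h.2, rfl⟩
    · left; exact if_neg h
  · by_cases h : ∃ x ∈ D.S1 (R.l1 (R.pa q.1) q.1),
      D.glue (R.l1 (R.pa q.1) q.1) (R.l2 (R.pa q.1) q.1) x = q.2
    · right
      have hu : R.up (Sum.inr q) = Sum.inl (R.pa q.1, h.choose) := dif_pos h
      refine ⟨?_, Or.inr ⟨_, _, rfl, hu, ?_⟩⟩
      · rw [hu]; exact R.pa_dep _
      · rw [R.cross_iff]
        exact ⟨R.pa_adj _, h.choose_spec.1, h.choose_spec.2.symm⟩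
    · left; exact dif_neg h

theorem up_fix_inl (R : D.Rooted) (a : D.VT1) (x : V1) (h : a = R.a0 ∨ x ∉ D.S1 (R.kE a)) :
    R.up (Sum.inl (a, x)) = Sum.inl (a, x) := by
  classical
  refine if_neg ?_
  rintro ⟨h1, h2⟩
  rcases h with h | h
  · exact h1 h
  · exact h h2

theorem up_cross (R : D.Rooted) (p : D.VT1 × V1) (q : D.VT2 × V2) (h : D.cross p q) :
    R.up (Sum.inl p) = Sum.inr q ∨ R.up (Sum.inr q) = Sum.inl p := by
  classical
  obtain ⟨h1, h2, h3⟩ := (R.cross_iff p q).1 h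
  obtain ⟨a, x⟩ := p
  obtain ⟨b, y⟩ := q
  dsimp only at h1 h2 h3
  rcases R.cases _ _ h1 with ⟨h4, rfl⟩ | rfl
  · left
    have : R.up (Sum.inl (a, x)) =
        Sum.inr (R.ph a, D.glue (R.kE a) (R.l2 a (R.ph a)) x) := if_pos ⟨h4, h2⟩
    rw [this, h3]; rfl
  · right
    have hex : ∃ x ∈ D.S1 (R.l1 (R.pa b) b),
      D.glue (R.l1 (R.pa b) b) (R.l2 (R.pa b) b) x = y := ⟨x, h2, h3.symm⟩
    have hu : R.up (Sum.inr (b, y)) = Sum.inl (R.pa b, hex.choose) := dif_pos hex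
    rw [hu]
    have := (D.glue_bij (R.l1 (R.pa b) b) (R.l2 (R.pa b) b)).injOn hex.choose_spec.1 h2
      (hex.choose_spec.2.trans h3)
    rw [this]

theorem toAmalg_up (R : D.Rooted) (p : D.PlusV) : D.toAmalg (R.up p) = D.toAmalg p := by
  rcases R.up_cases p with h | ⟨-, ⟨q, r, h1, h2, h3⟩ | ⟨q, r, h1, h2, h3⟩⟩
  · rw [h]
  · rw [h2, h1, D.toAmalg_cross h3]
  · rw [h2, h1, D.toAmalg_cross h3]

theorem toAmalg_iter (R : D.Rooted) (p : D.PlusV) (n : ℕ) :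
    D.toAmalg (R.up^[n] p) = D.toAmalg p := by
  induction n generalizing p with
  | zero => rfl
  | succ n ih => rw [Function.iterate_succ_apply, ih, toAmalg_up]

/-- canonical representative -/
noncomputable def can (R : D.Rooted) (p : D.PlusV) : D.PlusV := R.up^[R.dp p] p

theorem can_of_fix (R : D.Rooted) (p : D.PlusV) (h : R.up p = p) : R.can p = p :=
  Function.iterate_fixed h _

theorem can_up (R : D.Rooted) (p : D.PlusV) : R.can (R.up p) = R.can p := by
  rcases R.up_cases p with h | ⟨h, -⟩
  · rw [h]
  · rw [can, can, h, Function.iterate_succ_apply]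

theorem toAmalg_can (R : D.Rooted) (p : D.PlusV) : D.toAmalg (R.can p) = D.toAmalg p :=
  R.toAmalg_iter _ _

theorem can_rel (R : D.Rooted) (p q : D.PlusV) (h : D.idRel p q) : R.can p = R.can q := by
  obtain ⟨p, q, rfl, rfl, h⟩ := h
  rcases R.up_cross p q h with h | h
  · rw [← h, can_up]
  · rw [← h, can_up]

/-- canonical representative of a vertex -/
noncomputable def canQ (R : D.Rooted) : D.AmalgV → D.PlusV := Quot.lift R.can R.can_rel

theorem canQ_mk (R : D.Rooted) (p : D.PlusV) : R.canQ (D.toAmalg p) = R.can p := rfl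

theorem eq_of_fix (R : D.Rooted) {p q : D.PlusV} (hp : R.up p = p) (hq : R.up q = q)
    (h : D.toAmalg p = D.toAmalg q) : p = q := by
  rw [← R.can_of_fix p hp, ← R.can_of_fix q hq, ← canQ_mk, ← canQ_mk, h]

theorem dp_iter (R : D.Rooted) (p : D.PlusV) (n : ℕ)
    (h : ∀ i < n, R.up (R.up^[i] p) ≠ R.up^[i] p) : R.dp p = R.dp (R.up^[n] p) + n := by
  induction n with
  | zero => rfl
  | succ n ih =>
    have h1 := ih (fun i hi => h i (by omega))
    rcases R.up_cases (R.up^[n] p) with h2 | ⟨h2, -⟩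
    · exact absurd h2 (h n (by omega))
    · rw [Function.iterate_succ_apply', h1]; omega

theorem exists_fix (R : D.Rooted) (p : D.PlusV) (B : ℕ)
    (hfin : {a | ∃ x, D.toAmalg (Sum.inl (a, x)) = D.toAmalg p}.Finite)
    (hB : {a | ∃ x, D.toAmalg (Sum.inl (a, x)) = D.toAmalg p}.ncard ≤ B) :
    ∃ n ≤ 2 * B + 1, R.up^[n] p = R.can p := by
  suffices h : ∃ n ≤ 2 * B + 1, R.up (R.up^[n] p) = R.up^[n] p by
    obtain ⟨n, hn, h⟩ := h
    refine ⟨n, hn, ?_⟩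
    rw [← R.can_of_fix _ h, ← canQ_mk, toAmalg_iter, canQ_mk]
  by_contra hcon
  push Not at hcon
  have h1 : ∀ i, i ≤ 2 * B + 1 → ∃ a x, D.toAmalg (Sum.inl (a, x)) = D.toAmalg p ∧
      (R.dep1 a = R.dp (R.up^[i] p) ∨ R.dep1 a + 1 = R.dp (R.up^[i] p)) := by
    intro i hi
    rcases R.up_cases (R.up^[i] p) with h | ⟨h1, ⟨q, r, h2, h3, h4⟩ | ⟨q, r, h2, h3, h4⟩⟩
    · exact absurd h (hcon i hi)
    · refine ⟨q.1, q.2, ?_, Or.inl ?_⟩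
      · have := R.toAmalg_iter p i
        rw [h2] at this
        exact this
      · rw [h2]; rfl
    · refine ⟨q.1, q.2, ?_, Or.inr ?_⟩
      · have := R.toAmalg_iter p (i + 1)
        rw [Function.iterate_succ_apply', h3] at this
        exact this
      · rw [h1, h3]; rfl
  have h2 : ∀ i : Fin (B + 1), ∃ a, (∃ x, D.toAmalg (Sum.inl (a, x)) = D.toAmalg p) ∧
      (R.dep1 a + 2 * i = R.dp p ∨ R.dep1 a + 1 + 2 * i = R.dp p) := by
    intro i
    obtain ⟨a, x, h3, h4⟩ := h1 (2 * i) (by omega)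
    have h5 := R.dp_iter p (2 * i) (fun j hj => hcon j (by omega))
    exact ⟨a, ⟨x, h3⟩, by omega⟩
  choose a ha hd using h2
  have hinj : Function.Injective a := by
    intro i j hij
    have h3 := hd i
    have h4 := hd j
    rw [hij] at h3
    ext
    omega
  have h3 : Set.range a ⊆ {a | ∃ x, D.toAmalg (Sum.inl (a, x)) = D.toAmalg p} := by
    rintro _ ⟨i, rfl⟩; exact ha i
  have h4 := Set.ncard_le_ncard h3 hfin
  have h5 : (Set.range a).ncard = B + 1 := by
    rw [← Set.image_univ, Set.ncard_image_of_injective _ hinj, Set.ncard_univ]; simp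
  omega

theorem S1_ncard (R : D.Rooted) [Finite V2] (k : D.K1) : (D.S1 k).ncard ≤ Nat.card V2 := by
  have h := D.glue_bij k (R.l2 R.a0 (R.ph R.a0))
  rw [← h.injOn.ncard_image, ← Set.ncard_univ]
  exact Set.ncard_le_ncard (Set.subset_univ _) (Set.toFinite _)

theorem local_bound (R : D.Rooted) [Finite V2] [Infinite V1] (hc1 : G1.Connected)
    (hlf1 : LocallyFiniteGraph G1) (hA : D.amalgGraph.Connected)
    (hlf : LocallyFiniteGraph D.amalgGraph) (hqt : QuasiTransitive D.amalgGraph)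
    (hS : ∀ k, (D.S1 k).Finite) (r : ℕ) :
    ∃ B, ∀ v, {a | ∃ x, D.amalgGraph.dist v (D.toAmalg (Sum.inl (a, x))) ≤ r}.Finite ∧
      {a | ∃ x, D.amalgGraph.dist v (D.toAmalg (Sum.inl (a, x))) ≤ r}.ncard ≤ B := by
  obtain ⟨B, hB⟩ := cball_bound hA hqt (r + Nat.card V2)
  refine ⟨B, fun v => ?_⟩
  set S := {a | ∃ x, D.amalgGraph.dist v (D.toAmalg (Sum.inl (a, x))) ≤ r}
  have h1 : ∀ a, ∃ y, a ∈ S → D.amalgGraph.dist v (D.toAmalg (Sum.inl (a, y))) ≤ r + Nat.card V2 ∧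
      R.up (Sum.inl (a, y)) = Sum.inl (a, y) := by
    intro a
    by_cases ha : a ∈ S
    · obtain ⟨x, hx⟩ := ha
      obtain ⟨y, hy, hyS⟩ := exists_near_not_mem hc1 hlf1 x _ _ (hS (R.kE a)) (R.S1_ncard _)
      refine ⟨y, fun _ => ⟨?_, R.up_fix_inl _ _ (Or.inr hyS)⟩⟩
      have h2 := D.dist_inl_le hc1 hA a x y
      have h3 := hA.dist_triangle (u := v) (v := D.toAmalg (Sum.inl (a, x)))
        (w := D.toAmalg (Sum.inl (a, y)))
      omega
    · exact ⟨hc1.nonempty.some, fun h => absurd h ha⟩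
  choose y hy using h1
  have hmaps : ∀ a ∈ S, D.toAmalg (Sum.inl (a, y a)) ∈ cball D.amalgGraph v (r + Nat.card V2) :=
    fun a ha => (hy a ha).1
  have hinj : Set.InjOn (fun a => D.toAmalg (Sum.inl (a, y a))) S := by
    intro a ha a' ha' h
    have := R.eq_of_fix (hy a ha).2 (hy a' ha').2 h
    simp only [Sum.inl.injEq, Prod.mk.injEq] at this
    exact this.1
  have hf := cball_finite hA hlf v (r + Nat.card V2)
  refine ⟨Set.Finite.of_injOn hmaps hinj hf, ?_⟩
  exact (Set.ncard_le_ncard_of_injOn _ hmaps hinj hf).trans (hB v)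

end Rooted
end TreeAmalgData


theorem goodAction_diam {V K : Type u} {G : SimpleGraph V} (hG : G.Connected) {S : K → Set V}
    (h : GoodAction G S) (hS : ∀ k, (S k).Finite) :
    ∃ C, ∀ k, ∀ x ∈ S k, ∀ y ∈ S k, G.dist x y ≤ C := by
  have h1 : ∀ k, ∃ c, ∀ x ∈ S k, ∀ y ∈ S k, G.dist x y ≤ c := by
    intro k
    obtain ⟨c, hc⟩ := (((hS k).prod (hS k)).image fun p => G.dist p.1 p.2).bddAbove
    exact ⟨c, fun x hx y hy => hc ⟨(x, y), ⟨hx, hy⟩, rfl⟩⟩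
  choose c hc using h1
  obtain ⟨Γ, -, I, hI, hk⟩ := h
  obtain ⟨C, hC⟩ := (hI.image c).bddAbove
  refine ⟨C, fun k x hx y hy => ?_⟩
  obtain ⟨k', hk', g, -, hg⟩ := hk k
  rw [← hg] at hx hy
  obtain ⟨x, hx, rfl⟩ := hx
  obtain ⟨y, hy, rfl⟩ := hy
  rw [iso_dist hG]
  exact (hc k' x hx y hy).trans (hC ⟨k', hk', rfl⟩)

theorem near_slots {V : Type u} {G : SimpleGraph V} (hG : G.Connected)
    (hl : LocallyFiniteGraph G) [Infinite V] (Z : Set V) (C : ℕ)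
    (hC : ∀ w, ∃ z ∈ Z, G.dist w z ≤ C) (M : ℕ) :
    ∃ R, ∀ w, ∃ t : Fin M → Z, Function.Injective t ∧ (∀ i, (t i : V) ≠ w) ∧
      ∀ i, G.dist w (t i) ≤ R := by
  refine ⟨M * (2 * C + 1) + C, fun w => ?_⟩
  have h : ∀ i : Fin M, ∃ z : Z, G.dist w z ≤ (i + 1) * (2 * C + 1) + C ∧
      (i + 1) * (2 * C + 1) ≤ G.dist w z + C := by
    intro i
    obtain ⟨v, hv⟩ := exists_vertex_at_dist hG hl w ((i + 1) * (2 * C + 1))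
    obtain ⟨z, hz, hvz⟩ := hC v
    refine ⟨⟨z, hz⟩, ?_, ?_⟩
    · have := hG.dist_triangle (u := w) (v := v) (w := z)
      simp only
      omega
    · have := hG.dist_triangle (u := w) (v := z) (w := v)
      rw [dist_comm (u := z)] at this
      simp only
      omega
  choose t h1 h2 using h
  have hlt : ∀ i j : Fin M, i < j → t i ≠ t j := by
    intro i j hij h
    have h3 := h1 i
    have h4 := h2 j
    rw [h] at h3
    have h5 : ((i : ℕ) + 1 + 1) * (2 * C + 1) ≤ (j + 1) * (2 * C + 1) :=
      Nat.mul_le_mul_right _ (by have : (i : ℕ) < j := hij; omega)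
    have h6 : ((i : ℕ) + 1 + 1) * (2 * C + 1) = (i + 1) * (2 * C + 1) + (2 * C + 1) := by ring
    omega
  refine ⟨t, ?_, ?_, ?_⟩
  · intro i j hij
    rcases lt_trichotomy i j with h | h | h
    · exact absurd hij (hlt i j h)
    · exact h
    · exact absurd hij.symm (hlt j i h)
  · intro i h
    have h3 := h2 i
    rw [h] at h3
    have h4 : 1 * (2 * C + 1) ≤ ((i : ℕ) + 1) * (2 * C + 1) := Nat.mul_le_mul_right _ (by omega)
    simp only [SimpleGraph.dist_self] at h3
    omega
  · intro i
    have h3 := h1 i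
    have h4 : ((i : ℕ) + 1) * (2 * C + 1) ≤ M * (2 * C + 1) :=
      Nat.mul_le_mul_right _ (by have := i.2; omega)
    omega

namespace TreeAmalgData

theorem singleton_class {V1 V2 : Type u} {G1 : SimpleGraph V1} {G2 : SimpleGraph V2}
    (D : TreeAmalgData G1 G2) (a : D.VT1) (x : V1) (hx : ∀ k, x ∉ D.S1 k) (p : D.PlusV)
    (h : D.toAmalg (Sum.inl (a, x)) = D.toAmalg p) : p = Sum.inl (a, x) := by
  let F : D.AmalgV → Prop := Quot.lift (fun p => p = Sum.inl (a, x)) (by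
    rintro _ _ ⟨p, q, rfl, rfl, h, h1, h2⟩
    refine propext ⟨fun h' => ?_, fun h' => ?_⟩
    · have := Sum.inl.inj h'
      subst this
      exact absurd h1 (hx _)
    · cases h')
  have h1 : F (D.toAmalg (Sum.inl (a, x))) := rfl
  rw [h] at h1
  exact h1

theorem Rooted.cobounded {V1 V2 : Type u} {G1 : SimpleGraph V1} {G2 : SimpleGraph V2}
    {D : TreeAmalgData G1 G2} (R : D.Rooted) [Infinite V1] (hc1 : G1.Connected)
    (hlf1 : LocallyFiniteGraph G1) (hqt1 : QuasiTransitive G1) (hA : D.amalgGraph.Connected)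
    (hlf : LocallyFiniteGraph D.amalgGraph) (hqt : QuasiTransitive D.amalgGraph)
    (hS : ∀ k, (D.S1 k).Finite) :
    ∃ C, ∀ w, ∃ k, ∃ x ∈ D.S1 k, G1.dist w x ≤ C := by
  by_contra hcon
  push Not at hcon
  choose w hw using hcon
  let ι : V1 → D.AmalgV := fun x => D.toAmalg (Sum.inl (R.a0, x))
  have hinj : Function.Injective ι := by
    intro x y h
    have := R.eq_of_fix (R.up_fix_inl R.a0 x (Or.inl rfl)) (R.up_fix_inl R.a0 y (Or.inl rfl)) h
    simpa using this
  have hsub : ∀ w r, ι '' cball G1 w r ⊆ cball D.amalgGraph (ι w) r := by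
    rintro w r _ ⟨x, hx, rfl⟩
    exact (D.dist_inl_le hc1 hA R.a0 w x).trans hx
  have hball : ∀ n r, r ≤ n → ι '' cball G1 (w n) r = cball D.amalgGraph (ι (w n)) r := by
    intro n r hr
    refine (hsub _ _).antisymm ?_
    induction r with
    | zero =>
      intro v hv
      have : D.amalgGraph.dist (ι (w n)) v = 0 := Nat.le_zero.1 hv
      refine ⟨w n, ?_, (hA.dist_eq_zero_iff).1 this⟩
      simp [cball]
    | succ r ih =>
      intro v hv
      have hv : D.amalgGraph.dist (ι (w n)) v ≤ r + 1 := hv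
      rcases Nat.lt_or_ge (D.amalgGraph.dist (ι (w n)) v) (r + 1) with h | h
      · obtain ⟨x, hx, rfl⟩ := ih (by omega)
          (show v ∈ cball D.amalgGraph (ι (w n)) r from Nat.lt_succ_iff.1 h)
        exact ⟨x, Nat.le_succ_of_le hx, rfl⟩
      · obtain ⟨v', h1, h2⟩ := dist_succ_cases hA (le_antisymm hv h)
        obtain ⟨x, hx, rfl⟩ := ih (by omega)
          (show v' ∈ cball D.amalgGraph (ι (w n)) r from h1.le)
        have hx' : G1.dist (w n) x ≤ r := hx
        have hxS : ∀ k, x ∉ D.S1 k := by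
          intro k hk
          have := hw n k x hk
          omega
        rcases D.amalg_adj_cases h2 with ⟨a, x1, x2, h3, rfl, h5⟩ | ⟨b, y1, y2, h3, h4, h5⟩
        · have h6 := D.singleton_class R.a0 x hxS _ h3
          simp only [Sum.inl.injEq, Prod.mk.injEq] at h6
          obtain ⟨rfl, rfl⟩ := h6
          refine ⟨x2, ?_, rfl⟩
          have h7 := hc1.dist_triangle (u := w n) (v := x1) (w := x2)
          rw [dist_eq_one_iff_adj.2 h5] at h7
          show G1.dist _ _ ≤ _
          omega
        · have h6 := D.singleton_class R.a0 x hxS _ h3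
          cases h6
  have hcard : ∀ n r, r ≤ n → (cball D.amalgGraph (ι (w n)) r).ncard = (cball G1 (w n) r).ncard := by
    intro n r hr
    rw [← hball n r hr, Set.ncard_image_of_injective _ hinj]
  obtain ⟨sA, hsA, hsA'⟩ := hqt
  obtain ⟨s1, hs1, hs1'⟩ := hqt1
  have hτ : ∀ n, ∃ p : sA × s1, (∃ g : D.amalgGraph ≃g D.amalgGraph, g p.1 = ι (w n)) ∧
      ∃ g : G1 ≃g G1, g p.2 = w n := by
    intro n
    obtain ⟨u, hu, hg⟩ := hsA' (ι (w n))
    obtain ⟨u', hu', hg'⟩ := hs1' (w n)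
    exact ⟨⟨⟨u, hu⟩, ⟨u', hu'⟩⟩, hg, hg'⟩
  choose τ hτ1 hτ2 using hτ
  have := hsA.to_subtype
  have := hs1.to_subtype
  obtain ⟨p, hp⟩ := Finite.exists_infinite_fiber τ
  have hp' : (τ ⁻¹' {p}).Infinite := Set.infinite_coe_iff.1 hp
  obtain ⟨n0, hn0⟩ := hp'.nonempty
  have key : ∀ r, (cball D.amalgGraph (ι (w n0)) r).ncard = (cball G1 (w n0) r).ncard := by
    intro r
    obtain ⟨n, hn, hrn⟩ := hp'.exists_gt r
    have h1 := hcard n r hrn.le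
    have e0 : τ n0 = p := hn0
    have e1 : τ n = p := hn
    obtain ⟨g1, hg1⟩ := hτ1 n
    obtain ⟨g2, hg2⟩ := hτ2 n
    obtain ⟨g3, hg3⟩ := hτ1 n0
    obtain ⟨g4, hg4⟩ := hτ2 n0
    rw [e0] at hg3 hg4
    rw [e1] at hg1 hg2
    rw [← hg3, ← hg4, cball_ncard_iso hA, cball_ncard_iso hc1]
    rw [← hg1, ← hg2, cball_ncard_iso hA, cball_ncard_iso hc1] at h1
    exact h1
  obtain ⟨a, ha⟩ := R.ex
  obtain ⟨y, -, hy⟩ := exists_near_not_mem hc1 hlf1 (w 0) _ _ (hS (R.kE a)) le_rfl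
  have hmem : D.toAmalg (Sum.inl (a, y)) ∈ ι '' cball G1 (w n0)
      (D.amalgGraph.dist (ι (w n0)) (D.toAmalg (Sum.inl (a, y)))) := by
    rw [Set.eq_of_subset_of_ncard_le (hsub _ _) ?_ (cball_finite hA hlf _ _)]
    · exact Nat.le_refl _
    · rw [key, Set.ncard_image_of_injective _ hinj]
  obtain ⟨x, -, hx⟩ := hmem
  have := R.eq_of_fix (R.up_fix_inl R.a0 x (Or.inl rfl)) (R.up_fix_inl a y (Or.inr hy)) hx
  simp only [Sum.inl.injEq, Prod.mk.injEq] at this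
  exact ha this.1.symm

end TreeAmalgData


/-- combinatorial data of the new amalgamation tree -/
structure NewTree (X : Type u) (Z : Type u) where
  a0 : X
  P : X → X
  σ : X → Z
  e : X → Z
  ε : X → ℕ
  h1 : ∀ c, c ≠ a0 → (P c = a0 ∨ σ c ≠ e (P c))
  h2 : ∀ a z, (a = a0 ∨ z ≠ e a) → ∃ c, c ≠ a0 ∧ P c = a ∧ σ c = z
  h3 : ∀ c c', c ≠ a0 → c' ≠ a0 → P c = P c' → σ c = σ c' → c = c'
  h4 : ∀ c, c ≠ a0 → ε c = ε (P c) + 1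
  h5 : ∀ a, ∃ z, z ≠ e a

namespace NewTree
variable {X Z : Type u} (N : NewTree X Z)

/-- adjacency -/
def Rel (a b : X) : Prop := (b ≠ N.a0 ∧ N.P b = a) ∨ (a ≠ N.a0 ∧ N.P a = b)

theorem rel_symm {a b : X} (h : N.Rel a b) : N.Rel b a := Or.symm h

theorem rel_parity {a b : X} (h : N.Rel a b) : Even (N.ε a) ↔ ¬ Even (N.ε b) := by
  rcases h with ⟨h, rfl⟩ | ⟨h, rfl⟩
  · rw [N.h4 b h, Nat.even_add_one, not_not]
  · rw [N.h4 a h, Nat.even_add_one]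

theorem not_both {a b : X} (h : b ≠ N.a0 ∧ N.P b = a) : ¬ (a ≠ N.a0 ∧ N.P a = b) := by
  rintro ⟨h1, h2⟩
  have h3 := N.h4 b h.1
  have h4 := N.h4 a h1
  rw [h.2] at h3
  rw [h2] at h4
  omega

open Classical in
/-- label at `a` of the edge from `a` to `b` -/
noncomputable def L (a b : X) : Z := if b ≠ N.a0 ∧ N.P b = a then N.σ b else N.e a

theorem L_child {a b : X} (h : b ≠ N.a0 ∧ N.P b = a) : N.L a b = N.σ b := if_pos h

theorem L_parent {a b : X} (h : a ≠ N.a0 ∧ N.P a = b) : N.L a b = N.e a :=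
  if_neg (N.not_both h)

theorem L_surj (a : X) (z : Z) : ∃ b, N.Rel a b ∧ N.L a b = z := by
  by_cases h : a = N.a0 ∨ z ≠ N.e a
  · obtain ⟨c, h1, h2, h3⟩ := N.h2 a z h
    exact ⟨c, Or.inl ⟨h1, h2⟩, (N.L_child ⟨h1, h2⟩).trans h3⟩
  · push Not at h
    exact ⟨N.P a, Or.inr ⟨h.1, rfl⟩, (N.L_parent ⟨h.1, rfl⟩).trans h.2.symm⟩

theorem L_inj {a b b' : X} (h : N.Rel a b) (h' : N.Rel a b') (hL : N.L a b = N.L a b') :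
    b = b' := by
  rcases h with h | h <;> rcases h' with h' | h'
  · rw [N.L_child h, N.L_child h'] at hL
    exact N.h3 _ _ h.1 h'.1 (h.2.trans h'.2.symm) hL
  · rw [N.L_child h, N.L_parent h'] at hL
    rcases N.h1 b h.1 with h1 | h1
    · exact absurd (h.2.symm.trans h1) h'.1
    · rw [h.2] at h1; exact absurd hL h1
  · rw [N.L_parent h, N.L_child h'] at hL
    rcases N.h1 b' h'.1 with h1 | h1
    · exact absurd (h'.2.symm.trans h1) h.1
    · rw [h'.2] at h1; exact absurd hL.symm h1
  · exact h.2.symm.trans h'.2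

theorem isTree : (bipGraph fun (a : {c // Even (N.ε c)}) (b : {c // ¬ Even (N.ε c)}) =>
    N.Rel a b).IsTree := by
  classical
  let un : {c // Even (N.ε c)} ⊕ {c // ¬ Even (N.ε c)} ≃ X := Equiv.sumCompl fun c => Even (N.ε c)
  refine isTree_of_parent _ (un.symm N.a0) (fun t => un.symm (N.P (un t))) (fun t => N.ε (un t)) ?_ ?_
  · intro t ht
    rw [Equiv.apply_symm_apply]
    exact N.h4 _ (fun h => ht (by rw [← h, Equiv.symm_apply_apply]))
  · have hR : ∀ t t', ((t' ≠ un.symm N.a0 ∧ un.symm (N.P (un t')) = t) ∨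
        (t ≠ un.symm N.a0 ∧ un.symm (N.P (un t)) = t')) ↔ N.Rel (un t) (un t') := by
      intro t t'
      simp only [Rel, ne_eq, Equiv.eq_symm_apply, Equiv.symm_apply_eq]
    intro t t'
    rw [hR]
    rcases t with a | b <;> rcases t' with a' | b'
    · refine ⟨fun h => absurd h (TreeAmalgData.bip_adj_ll _ _ _), fun h => ?_⟩
      have := N.rel_parity h
      have h1 := a.2
      have h2 := a'.2
      exact absurd h2 (this.1 h1)
    · exact TreeAmalgData.bip_adj_lr _ _ _
    · rw [TreeAmalgData.bip_adj_rl]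
      exact ⟨fun h => N.rel_symm h, fun h => N.rel_symm h⟩
    · refine ⟨fun h => absurd h (TreeAmalgData.bip_adj_rr _ _ _), fun h => ?_⟩
      have := N.rel_parity h
      have h1 := b.2
      have h2 := b'.2
      exact absurd (this.2 h2) h1

end NewTree

section newE
variable {V1 : Type u} (G1 : SimpleGraph V1) {X : Type u} {Z : Set V1} (N : NewTree X Z)

/-- the new tree amalgamation -/
noncomputable def newE : TreeAmalgData G1 G1 where
  VT1 := {c // Even (N.ε c)}
  VT2 := {c // ¬ Even (N.ε c)}
  K1 := Z
  K2 := Z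
  Tadj := fun a b => N.Rel a b
  isTree := N.isTree
  lab1 := fun a b _ => N.L a b
  lab2 := fun a b _ => N.L b a
  lab1_bij := by
    intro a
    constructor
    · rintro ⟨b, hb⟩ ⟨b', hb'⟩ h
      exact Subtype.ext (Subtype.ext (N.L_inj hb hb' h))
    · intro z
      obtain ⟨b, hb, hz⟩ := N.L_surj a z
      exact ⟨⟨⟨b, (N.rel_parity hb).1 a.2⟩, hb⟩, hz⟩
  lab2_bij := by
    intro b
    constructor
    · rintro ⟨a, ha⟩ ⟨a', ha'⟩ h
      exact Subtype.ext (Subtype.ext (N.L_inj (N.rel_symm ha) (N.rel_symm ha') h))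
    · intro z
      obtain ⟨a, ha, hz⟩ := N.L_surj b z
      exact ⟨⟨⟨a, (N.rel_parity (N.rel_symm ha)).2 b.2⟩, N.rel_symm ha⟩, hz⟩
  S1 := fun z => {z.1}
  S2 := fun z => {z.1}
  S1_nonempty := fun z => ⟨z.1, rfl⟩
  glue := fun _ l _ => l.1
  glue_bij := by
    intro k l
    refine ⟨fun x _ => rfl, ?_, ?_⟩
    · intro x hx y hy _
      exact (show x = k.1 from hx).trans (show y = k.1 from hy).symm
    · intro y hy
      exact ⟨k.1, rfl, (show y = l.1 from hy).symm⟩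

theorem newE_cross (a : {c // Even (N.ε c)}) (b : {c // ¬ Even (N.ε c)}) (x y : V1) :
    (newE G1 N).cross (a, x) (b, y) ↔ N.Rel a b ∧ x = N.L a b ∧ y = N.L b a := by
  constructor
  · rintro ⟨h, h1, h2⟩; exact ⟨h, h1, h2⟩
  · rintro ⟨h, h1, h2⟩; exact ⟨h, h1, h2⟩

open Classical in
/-- the copy of `G1` at `c` -/
noncomputable def iE (c : X) (x : V1) : (newE G1 N).AmalgV :=
  if h : Even (N.ε c) then (newE G1 N).toAmalg (Sum.inl (⟨c, h⟩, x))
  else (newE G1 N).toAmalg (Sum.inr (⟨c, h⟩, x))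

theorem iE_even (c : X) (h : Even (N.ε c)) (x : V1) :
    iE G1 N c x = (newE G1 N).toAmalg (Sum.inl (⟨c, h⟩, x)) := dif_pos h

theorem iE_odd (c : X) (h : ¬ Even (N.ε c)) (x : V1) :
    iE G1 N c x = (newE G1 N).toAmalg (Sum.inr (⟨c, h⟩, x)) := dif_neg h

theorem iE_glue (c : X) (hc : c ≠ N.a0) : iE G1 N (N.P c) (N.σ c) = iE G1 N c (N.e c) := by
  by_cases h : Even (N.ε c)
  · have h' : ¬ Even (N.ε (N.P c)) := (N.rel_parity (Or.inr ⟨hc, rfl⟩)).1 h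
    rw [iE_even G1 N c h, iE_odd G1 N _ h']
    symm
    apply TreeAmalgData.toAmalg_cross
    rw [newE_cross]
    exact ⟨Or.inr ⟨hc, rfl⟩, congrArg _ (N.L_parent ⟨hc, rfl⟩).symm,
      congrArg _ (N.L_child ⟨hc, rfl⟩).symm⟩
  · have h' : Even (N.ε (N.P c)) := (N.rel_parity (Or.inl ⟨hc, rfl⟩)).2 h
    rw [iE_odd G1 N c h, iE_even G1 N _ h']
    apply TreeAmalgData.toAmalg_cross
    rw [newE_cross]
    exact ⟨Or.inl ⟨hc, rfl⟩, congrArg _ (N.L_child ⟨hc, rfl⟩).symm,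
      congrArg _ (N.L_parent ⟨hc, rfl⟩).symm⟩

theorem iE_surj (v : (newE G1 N).AmalgV) : ∃ c x, v = iE G1 N c x := by
  obtain ⟨p, rfl⟩ := (newE G1 N).toAmalg_surj v
  rcases p with ⟨a, x⟩ | ⟨b, x⟩
  · exact ⟨a.1, x, (iE_even G1 N a.1 a.2 x).symm⟩
  · exact ⟨b.1, x, (iE_odd G1 N b.1 b.2 x).symm⟩

theorem iE_lift {W : Type u} (F : X → V1 → W)
    (hF : ∀ c, c ≠ N.a0 → F (N.P c) (N.σ c) = F c (N.e c)) :
    ∃ f : (newE G1 N).AmalgV → W, ∀ c x, f (iE G1 N c x) = F c x := by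
  let f0 : (newE G1 N).PlusV → W
    | Sum.inl (a, x) => F a.1 x
    | Sum.inr (b, x) => F b.1 x
  refine ⟨Quot.lift f0 ?_, ?_⟩
  · rintro _ _ ⟨⟨a, x⟩, ⟨b, y⟩, rfl, rfl, h⟩
    obtain ⟨h1, rfl, rfl⟩ := (newE_cross G1 N a b x y).1 h
    show F a.1 _ = F b.1 _
    rcases h1 with h | h
    · rw [N.L_child h, N.L_parent h, ← h.2, hF _ h.1]
    · rw [N.L_child h, N.L_parent h, ← h.2, hF _ h.1]
  · intro c x
    by_cases h : Even (N.ε c)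
    · rw [iE_even G1 N c h]; rfl
    · rw [iE_odd G1 N c h]; rfl

theorem newE_adj {u v : (newE G1 N).AmalgV} (h : (newE G1 N).amalgGraph.Adj u v) :
    ∃ c x x', u = iE G1 N c x ∧ v = iE G1 N c x' ∧ G1.Adj x x' := by
  rcases (newE G1 N).amalg_adj_cases h with ⟨a, x, x', rfl, rfl, hh⟩ | ⟨a, x, x', rfl, rfl, hh⟩
  · exact ⟨a.1, x, x', (iE_even G1 N a.1 a.2 x).symm, (iE_even G1 N a.1 a.2 x').symm, hh⟩
  · exact ⟨a.1, x, x', (iE_odd G1 N a.1 a.2 x).symm, (iE_odd G1 N a.1 a.2 x').symm, hh⟩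

theorem newE_connected (hc1 : G1.Connected) : (newE G1 N).amalgGraph.Connected := by
  have h1 : ∀ c x x', G1.Adj x x' → (newE G1 N).amalgGraph.Reachable (iE G1 N c x) (iE G1 N c x') := by
    intro c x x' h
    by_cases hne : iE G1 N c x = iE G1 N c x'
    · rw [hne]
    · by_cases hc : Even (N.ε c)
      · rw [iE_even G1 N c hc, iE_even G1 N c hc] at hne ⊢
        exact ((newE G1 N).amalg_adj_inl _ h hne).reachable
      · rw [iE_odd G1 N c hc, iE_odd G1 N c hc] at hne ⊢
        exact ((newE G1 N).amalg_adj_inr _ h hne).reachable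
  have h2 : ∀ c x x', (newE G1 N).amalgGraph.Reachable (iE G1 N c x) (iE G1 N c x') := by
    intro c x x'
    obtain ⟨p⟩ := hc1.preconnected x x'
    induction p with
    | nil => exact Reachable.refl _
    | cons h p ih => exact (h1 c _ _ h).trans ih
  have h3 : ∀ n c, N.ε c = n → ∀ x x', (newE G1 N).amalgGraph.Reachable (iE G1 N N.a0 x) (iE G1 N c x') := by
    intro n
    induction n using Nat.strong_induction_on with
    | _ n ih =>
      intro c hc x x'
      by_cases h : c = N.a0
      · subst h; exact h2 _ _ _
      · have h4 := ih (N.ε (N.P c)) (by have := N.h4 c h; omega) (N.P c) rfl x (N.σ c)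
        rw [iE_glue G1 N c h] at h4
        exact h4.trans (h2 _ _ _)
  rw [connected_iff]
  refine ⟨fun u v => ?_, ⟨iE G1 N N.a0 hc1.nonempty.some⟩⟩
  obtain ⟨c, x, rfl⟩ := iE_surj G1 N u
  obtain ⟨c', x', rfl⟩ := iE_surj G1 N v
  exact (h3 _ c rfl hc1.nonempty.some x).symm.trans (h3 _ c' rfl _ _)

theorem iE_dist (hc1 : G1.Connected) (c : X) (x x' : V1) :
    (newE G1 N).amalgGraph.dist (iE G1 N c x) (iE G1 N c x') ≤ G1.dist x x' := by
  by_cases hc : Even (N.ε c)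
  · rw [iE_even G1 N c hc, iE_even G1 N c hc]
    exact (newE G1 N).dist_inl_le hc1 (newE_connected G1 N hc1) _ _ _
  · rw [iE_odd G1 N c hc, iE_odd G1 N c hc]
    exact (newE G1 N).dist_inr_le hc1 (newE_connected G1 N hc1) _ _ _

open Classical in
/-- the deepest representative of a vertex -/
noncomputable def slotF (N : NewTree X Z) (a : X) (x : V1) : X × V1 :=
  if h : ∃ c, c ≠ N.a0 ∧ N.P c = a ∧ (N.σ c : V1) = x then (h.choose, N.e h.choose) else (a, x)

theorem slotF_pos {c : X} (hc : c ≠ N.a0) : slotF N (N.P c) (N.σ c) = (c, (N.e c : V1)) := by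
  have h : ∃ c', c' ≠ N.a0 ∧ N.P c' = N.P c ∧ (N.σ c' : V1) = N.σ c := ⟨c, hc, rfl, rfl⟩
  have h1 : h.choose = c :=
    N.h3 _ _ h.choose_spec.1 hc h.choose_spec.2.1 (Subtype.ext h.choose_spec.2.2)
  have h2 : slotF N (N.P c) (N.σ c) = (h.choose, (N.e h.choose : V1)) := dif_pos h
  rw [h2, h1]

theorem slotF_cases (a : X) (x : V1) :
    (∃ c, c ≠ N.a0 ∧ N.P c = a ∧ (N.σ c : V1) = x ∧ slotF N a x = (c, (N.e c : V1))) ∨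
      slotF N a x = (a, x) := by
  by_cases h : ∃ c, c ≠ N.a0 ∧ N.P c = a ∧ (N.σ c : V1) = x
  · obtain ⟨c, hc, rfl, rfl⟩ := h
    exact Or.inl ⟨c, hc, rfl, rfl, slotF_pos N hc⟩
  · exact Or.inr (dif_neg h)

theorem slotF_e {c : X} (hc : c ≠ N.a0) : slotF N c (N.e c) = (c, (N.e c : V1)) := by
  rcases slotF_cases N c (N.e c) with ⟨c', h1, h2, h3, -⟩ | h
  · rcases N.h1 c' h1 with h | h
    · exact absurd (h2.symm.trans h) hc
    · rw [h2] at h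
      exact absurd (Subtype.ext h3) h
  · exact h

theorem slotF_glue (c : X) (hc : c ≠ N.a0) : slotF N (N.P c) (N.σ c) = slotF N c (N.e c) := by
  rw [slotF_pos N hc, slotF_e N hc]

theorem newE_nontrivial : ¬ (newE G1 N).IsTrivial := by
  have key : ∀ c : X, ¬ Function.Surjective (fun x => iE G1 N c x) := by
    intro c hs
    obtain ⟨f, hf⟩ := iE_lift G1 N (slotF N) (slotF_glue N)
    obtain ⟨z, hz⟩ := N.h5 c
    obtain ⟨c1, h1, h2, -⟩ := N.h2 c z (Or.inr hz)
    obtain ⟨z', hz'⟩ := N.h5 c1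
    obtain ⟨c2, h3, h4, -⟩ := N.h2 c1 z' (Or.inr hz')
    have h5 := N.h4 c1 h1
    have h6 := N.h4 c2 h3
    rw [h2] at h5
    rw [h4] at h6
    obtain ⟨x, hx⟩ := hs (iE G1 N c2 (N.e c2))
    have h7 := congrArg f hx
    simp only [hf] at h7
    rw [slotF_e N h3] at h7
    rcases slotF_cases N c x with ⟨c', h8, h9, -, h10⟩ | h8
    · rw [h10] at h7
      have h11 : c' = c2 := congrArg Prod.fst h7
      rw [h11, h4] at h9
      rw [h9] at h5
      omega
    · rw [h8] at h7
      have h11 : c = c2 := congrArg Prod.fst h7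
      rw [← h11] at h6
      omega
  rintro (⟨a, h⟩ | ⟨b, h⟩)
  · refine key a.1 ?_
    have : (fun x => iE G1 N a.1 x) = fun x => (newE G1 N).toAmalg (Sum.inl (a, x)) := by
      funext x; exact iE_even G1 N a.1 a.2 x
    rw [this]; exact h.2
  · refine key b.1 ?_
    have : (fun x => iE G1 N b.1 x) = fun x => (newE G1 N).toAmalg (Sum.inr (b, x)) := by
      funext x; exact iE_odd G1 N b.1 b.2 x
    rw [this]; exact h.2

end newE


theorem TreeAmalgData.Rooted.exists_newE {V1 V2 : Type u} {G1 : SimpleGraph V1}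
    {G2 : SimpleGraph V2} {D : TreeAmalgData G1 G2} (R : D.Rooted) [Infinite V1] [Finite V2]
    (hc1 : G1.Connected) (hc2 : G2.Connected)
    (hlf1 : LocallyFiniteGraph G1) (hqt1 : QuasiTransitive G1) (hA : D.amalgGraph.Connected)
    (hlf : LocallyFiniteGraph D.amalgGraph) (hqt : QuasiTransitive D.amalgGraph)
    (hS : ∀ k, (D.S1 k).Finite) (hD1 : GoodAction G1 D.S1) :
    ∃ E : TreeAmalgData G1 G1, ¬ E.IsTrivial ∧ QuasiIsometric D.amalgGraph E.amalgGraph := by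
  classical
  obtain ⟨C3, hC3⟩ := goodAction_diam hc1 hD1 hS
  obtain ⟨C, hC⟩ := R.cobounded hc1 hlf1 hqt1 hA hlf hqt hS
  obtain ⟨m2, hm2⟩ : ∃ m, ∀ y y' : V2, G2.dist y y' ≤ m := by
    obtain ⟨m, hm⟩ := (Set.finite_range fun p : V2 × V2 => G2.dist p.1 p.2).bddAbove
    exact ⟨m, fun y y' => hm ⟨(y, y'), rfl⟩⟩
  choose x hx using D.S1_nonempty
  let Z : Set V1 := Set.range x
  let xz : D.K1 → Z := fun k => ⟨x k, k, rfl⟩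
  have hZ : ∀ w, ∃ z ∈ Z, G1.dist w z ≤ C + C3 := by
    intro w
    obtain ⟨k, y, hy, h⟩ := hC w
    refine ⟨x k, ⟨k, rfl⟩, ?_⟩
    have h1 := hc1.dist_triangle (u := w) (v := y) (w := x k)
    have h2 := hC3 k y hy (x k) (hx k)
    omega
  let ι : D.VT1 → V1 → D.AmalgV := fun a y => D.toAmalg (Sum.inl (a, y))
  let dA := D.amalgGraph.dist
  have tA : ∀ u v w, dA u w ≤ dA u v + dA v w := fun u v w => hA.dist_triangle
  have cA : ∀ u v, dA u v = dA v u := fun u v => dist_comm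
  have ιd : ∀ a y y', dA (ι a y) (ι a y') ≤ G1.dist y y' := fun a y y' => D.dist_inl_le hc1 hA a y y'
  let gp : D.VT1 → D.VT1 := fun a => R.pa (R.ph a)
  let α : D.VT1 → Z := fun c => xz (R.l1 (gp c) (R.ph c))
  let e : D.VT1 → Z := fun c => xz (R.kE c)
  have hδ : ∀ c, c ≠ R.a0 → R.dep1 c = R.dep1 (gp c) + 2 := by
    intro c hc
    have h1 := R.ph_dep c hc
    have h2 := R.pa_dep (R.ph c)
    show _ = R.dep1 (R.pa (R.ph c)) + 2
    omega
  have hsurj : ∀ a z, (a = R.a0 ∨ z ≠ e a) → ∃ c, c ≠ R.a0 ∧ gp c = a ∧ α c = z := by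
    rintro a ⟨_, k, rfl⟩ haz
    obtain ⟨b, hb, hk⟩ := R.l1_surj a k
    rcases R.cases a b hb with ⟨h1, rfl⟩ | rfl
    · exfalso
      rcases haz with h | h
      · exact h1 h
      · apply h; rw [← hk]; rfl
    · obtain ⟨a', h1, h2⟩ := R.two _ _ hb
      rcases R.cases a' b h2 with ⟨h3, rfl⟩ | h3
      · refine ⟨a', h3, rfl, ?_⟩
        show xz (R.l1 (R.pa (R.ph a')) (R.ph a')) = _
        rw [hk]
      · exact absurd h3 h1
  -- hub distances
  have hinr : ∀ a b k, D.Tadj a b → R.l1 a b = k →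
      ι a (x k) = D.toAmalg (Sum.inr (b, D.glue (R.l1 a b) (R.l2 a b) (x k))) := by
    rintro a b k hab rfl
    apply D.toAmalg_cross
    rw [R.cross_iff]
    exact ⟨hab, hx _, rfl⟩
  have F3 : ∀ c, c ≠ R.a0 → dA (ι (gp c) (α c)) (ι c (e c)) ≤ m2 := by
    intro c hc
    have h1 := hinr (gp c) (R.ph c) _ (R.pa_adj _) rfl
    have h2 := hinr c (R.ph c) _ (R.ph_adj c hc) rfl
    show dA (ι (gp c) (x _)) (ι c (x (R.l1 c (R.ph c)))) ≤ m2
    rw [h1, h2]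
    exact (D.dist_inr_le hc2 hA _ _ _).trans (hm2 _ _)
  obtain ⟨D0, hD0⟩ := R.local_bound hc1 hlf1 hA hlf hqt hS m2
  have hfin : ∀ a z, {c | c ≠ R.a0 ∧ gp c = a ∧ α c = z}.Finite ∧
      {c | c ≠ R.a0 ∧ gp c = a ∧ α c = z}.ncard ≤ D0 := by
    intro a z
    obtain ⟨h1, h2⟩ := hD0 (ι a z)
    have hsub : {c | c ≠ R.a0 ∧ gp c = a ∧ α c = z} ⊆
        {c | ∃ y, D.amalgGraph.dist (ι a z) (D.toAmalg (Sum.inl (c, y))) ≤ m2} := by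
      rintro c ⟨hc, rfl, rfl⟩
      exact ⟨e c, F3 c hc⟩
    exact ⟨h1.subset hsub, (Set.ncard_le_ncard hsub h1).trans h2⟩
  obtain ⟨r, hr⟩ := near_slots hc1 hlf1 Z (C + C3) hZ ((2 * D0 + 1) + (2 * D0 + 1))
  choose t ht1 ht2 ht3 using hr
  let s : D.VT1 → Fin (2 * D0 + 1) → Z := fun a i => t (e a) (Fin.castAdd _ i)
  let φ : D.VT1 → Fin (2 * D0 + 1) → Z := fun a i => t (e a) (Fin.natAdd _ i)
  have hsr : ∀ a i, G1.dist (e a) (s a i) ≤ r := fun a i => ht3 _ _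
  have hφr : ∀ a i, G1.dist (e a) (φ a i) ≤ r := fun a i => ht3 _ _
  have hφs : ∀ a i j, G1.dist (φ a i) (s a j) ≤ 2 * r := by
    intro a i j
    have h1 := hc1.dist_triangle (u := (φ a i : V1)) (v := e a) (w := s a j)
    have h2 := hsr a j
    have h3 := hφr a i
    rw [dist_comm] at h3
    omega
  obtain ⟨P, σ, ε, p1, p2, p3, p4, p5⟩ := reassign R.a0 gp α e R.dep1 D0 hδ hsurj hfin s φ
    (fun a i j h => Fin.natAdd_injective _ _ (ht1 _ h))
    (fun a i j h => Fin.castAdd_injective _ _ (ht1 _ h))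
    (fun a i j h => by
      have := congrArg Fin.val (ht1 _ h)
      simp only [Fin.val_castAdd, Fin.val_natAdd] at this
      have := i.2
      omega)
    (fun a i h => ht2 (e a) _ (congrArg Subtype.val h))
    (fun a i h => ht2 (e a) _ (congrArg Subtype.val h))
  let N : NewTree D.VT1 Z := ⟨R.a0, P, σ, e, ε, p1, p2, p3, p4,
    fun a => ⟨s a 0, fun h => ht2 (e a) _ (congrArg Subtype.val h)⟩⟩
  refine ⟨newE G1 N, newE_nontrivial G1 N, ?_⟩
  have hE := newE_connected G1 N hc1
  let I := iE G1 N
  let dE := (newE G1 N).amalgGraph.dist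
  have tE : ∀ u v w, dE u w ≤ dE u v + dE v w := fun u v w => hE.dist_triangle
  have cE : ∀ u v, dE u v = dE v u := fun u v => dist_comm
  have zE : ∀ u, dE u u = 0 := fun u => SimpleGraph.dist_self
  have Id : ∀ a y y', dE (I a y) (I a y') ≤ G1.dist y y' := fun a y y' => iE_dist G1 N hc1 a y y'
  have Ig : ∀ c, c ≠ R.a0 → I (P c) (σ c) = I c (e c) := fun c hc => iE_glue G1 N c hc
  -- closeness in `E`
  have hU : ∀ c, c ≠ R.a0 → PlaceU gp α P σ c → dE (I c (e c)) (I (gp c) (α c)) = 0 := by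
    rintro c hc ⟨h1, h2⟩
    rw [← Ig c hc, h1, h2, zE]
  have hCc : ∀ c, c ≠ R.a0 → PlaceC R.a0 gp α s φ P σ c →
      dE (I c (e c)) (I (gp c) (α c)) ≤ 3 * r := by
    rintro c hc ⟨h1, h2, h3, ⟨i, h4, h5⟩, j, h6⟩
    have e1 := hU _ h1 h2
    rw [h3, h5] at e1
    have e2 := Id (P c) (s (P c) j) (e (P c))
    rw [dist_comm] at e2
    have e3 := hsr (P c) j
    have e4 := Id (gp c) (φ (gp c) i) (s (gp c) i)
    have e5 := hφs (gp c) i i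
    have e6 := tE (I (P c) (s (P c) j)) (I (P c) (e (P c))) (I (gp c) (φ (gp c) i))
    have e7 := tE (I (P c) (s (P c) j)) (I (gp c) (φ (gp c) i)) (I (gp c) (s (gp c) i))
    rw [← Ig c hc, h6, h4]
    omega
  have hclE : ∀ c, c ≠ R.a0 → dE (I c (e c)) (I (gp c) (α c)) ≤ 4 * r := by
    intro c hc
    rcases p5 c hc with h | ⟨h1, h2, j, h3⟩ | h | ⟨h1, h2, h3, ⟨j, h4⟩, h5⟩
    · rw [hU c hc h]; omega
    · have e1 := Id (gp c) (s (gp c) j) (e (gp c))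
      rw [dist_comm] at e1
      have e2 := hsr (gp c) j
      rw [← Ig c hc, h3, h2, h1]
      omega
    · have := hCc c hc h; omega
    · have e0 : dE (I (P c) (e (P c))) (I (gp (P c)) (α (P c))) ≤ 3 * r := by
        rcases h5 with h5 | h5
        · rw [hU _ h1 h5]; omega
        · exact hCc _ h1 h5
      rw [h2, h3] at e0
      have e2 := Id (P c) (s (P c) j) (e (P c))
      rw [dist_comm] at e2
      have e3 := hsr (P c) j
      have e6 := tE (I (P c) (s (P c) j)) (I (P c) (e (P c))) (I (gp c) (α c))
      rw [← Ig c hc, h4]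
      omega
  -- closeness in the original amalgamation
  have hclA : ∀ c, c ≠ R.a0 → dA (ι c (e c)) (ι (P c) (σ c)) ≤ 3 * r + 2 * m2 := by
    intro c hc
    have f1 := F3 c hc
    rw [cA] at f1
    rcases p5 c hc with ⟨h1, h2⟩ | ⟨h1, h2, j, h3⟩ | ⟨h1, ⟨-, -⟩, h3, ⟨i, h4, h5⟩, j, h6⟩ |
        ⟨h1, h2, h3, ⟨j, h4⟩, -⟩
    · rw [h1, h2]; omega
    · have e1 := ιd (gp c) (e (gp c)) (s (gp c) j)
      have e2 := hsr (gp c) j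
      rw [h2] at f1
      have e3 := tA (ι c (e c)) (ι (gp c) (e (gp c))) (ι (gp c) (s (gp c) j))
      rw [h3, h1]
      omega
    · have f2 := F3 _ h1
      rw [h3, h5] at f2
      rw [h4] at f1
      have e1 := ιd (gp c) (s (gp c) i) (φ (gp c) i)
      rw [dist_comm] at e1
      have e2 := hφs (gp c) i i
      have e3 := ιd (P c) (e (P c)) (s (P c) j)
      have e4 := hsr (P c) j
      have e5 := tA (ι c (e c)) (ι (gp c) (s (gp c) i)) (ι (gp c) (φ (gp c) i))
      have e6 := tA (ι c (e c)) (ι (gp c) (φ (gp c) i)) (ι (P c) (e (P c)))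
      have e7 := tA (ι c (e c)) (ι (P c) (e (P c))) (ι (P c) (s (P c) j))
      rw [h6]
      omega
    · have f2 := F3 _ h1
      rw [h2, h3] at f2
      have e3 := ιd (P c) (e (P c)) (s (P c) j)
      have e4 := hsr (P c) j
      have e6 := tA (ι c (e c)) (ι (gp c) (α c)) (ι (P c) (e (P c)))
      have e7 := tA (ι c (e c)) (ι (P c) (e (P c))) (ι (P c) (s (P c) j))
      rw [h4]
      omega
  -- the map `f`
  obtain ⟨f, hf⟩ := iE_lift G1 N (fun a y => ι (slotF N a y).1 (slotF N a y).2)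
    (fun c hc => by simp only [slotF_glue N c hc])
  obtain ⟨C5, hC5def⟩ : ∃ C5, C5 = 3 * r + 2 * m2 := ⟨_, rfl⟩
  have hfd : ∀ a y, dA (f (I a y)) (ι a y) ≤ C5 := by
    intro a y
    have h0 : f (I a y) = ι (slotF N a y).1 (slotF N a y).2 := hf a y
    rw [h0]
    rcases slotF_cases N a y with ⟨c, h1, rfl, rfl, h2⟩ | h
    · rw [h2, hC5def]
      exact hclA c h1
    · rw [h]
      have : dA (ι a y) (ι a y) = 0 := SimpleGraph.dist_self
      show dA (ι a y) (ι a y) ≤ C5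
      omega
  -- the map `g`
  let g0 : D.PlusV → (newE G1 N).AmalgV
    | Sum.inl (a, y) => I a y
    | Sum.inr (b, _) => I (R.pa b) (x (R.l1 (R.pa b) b))
  obtain ⟨C4, hC4def⟩ : ∃ C4, C4 = C3 + 4 * r := ⟨_, rfl⟩
  have hg0 : ∀ p q, D.cross p q → dE (g0 (Sum.inl p)) (g0 (Sum.inr q)) ≤ C4 := by
    rintro ⟨a, y⟩ ⟨b, y'⟩ h
    obtain ⟨h1, h2, -⟩ := (R.cross_iff _ _).1 h
    dsimp only at h1 h2
    show dE (I a y) (I (R.pa b) (x (R.l1 (R.pa b) b))) ≤ C4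
    rcases R.cases a b h1 with ⟨h3, rfl⟩ | rfl
    · have e1 := hclE a h3
      have e2 := Id a y (e a)
      have e3 := hC3 _ y h2 (e a) (hx _)
      have e4 := tE (I a y) (I a (e a)) (I (gp a) (α a))
      have e5 : dE (I a y) (I (gp a) (α a)) ≤ C4 := by omega
      exact e5
    · have e2 := Id (R.pa b) y (x (R.l1 (R.pa b) b))
      have e3 := hC3 _ y h2 _ (hx _)
      omega
  have hgup : ∀ p, dE (g0 p) (g0 (R.up p)) ≤ C4 := by
    intro p
    rcases R.up_cases p with h | ⟨-, ⟨q, w, h1, h2, h3⟩ | ⟨q, w, h1, h2, h3⟩⟩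
    · rw [h, zE]; omega
    · rw [h2, h1]; exact hg0 q w h3
    · rw [h2, h1, cE]; exact hg0 q w h3
  have hgit : ∀ n p, dE (g0 p) (g0 (R.up^[n] p)) ≤ C4 * n := by
    intro n p
    induction n with
    | zero => rw [Function.iterate_zero, id, zE]; omega
    | succ n ih =>
      rw [Function.iterate_succ_apply']
      have e1 := hgup (R.up^[n] p)
      have e2 := tE (g0 p) (g0 (R.up^[n] p)) (g0 (R.up (R.up^[n] p)))
      rw [Nat.mul_succ]
      omega
  obtain ⟨B, hB⟩ := R.local_bound hc1 hlf1 hA hlf hqt hS 0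
  obtain ⟨C6, hC6def⟩ : ∃ C6, C6 = C4 * (2 * B + 1) := ⟨_, rfl⟩
  have hcan : ∀ p, dE (g0 p) (g0 (R.can p)) ≤ C6 := by
    intro p
    obtain ⟨h1, h2⟩ := hB (D.toAmalg p)
    have hsub : {a | ∃ y, D.toAmalg (Sum.inl (a, y)) = D.toAmalg p} ⊆
        {a | ∃ y, D.amalgGraph.dist (D.toAmalg p) (D.toAmalg (Sum.inl (a, y))) ≤ 0} := by
      rintro a ⟨y, hy⟩
      exact ⟨y, by rw [hy]; simp⟩
    obtain ⟨n, hn, hn'⟩ := R.exists_fix p B (h1.subset hsub) ((Set.ncard_le_ncard hsub h1).trans h2)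
    rw [← hn', hC6def]
    exact (hgit n p).trans (Nat.mul_le_mul_left _ hn)
  let g : D.AmalgV → (newE G1 N).AmalgV := fun v => g0 (R.canQ v)
  have hg : ∀ p, dE (g (D.toAmalg p)) (g0 p) ≤ C6 := by
    intro p
    rw [cE]
    exact hcan p
  refine quasiIsometric_of_maps hA hE g f (2 * C6 + 1 + (2 * C5 + 1)) (C5 + m2 + C6) ?_ ?_ ?_ ?_
  · intro u v huv
    show dE (g u) (g v) ≤ _
    rcases D.amalg_adj_cases huv with ⟨a, y, y', rfl, rfl, h⟩ | ⟨b, y, y', rfl, rfl, h⟩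
    · have e1 := hg (Sum.inl (a, y))
      have e2 := hg (Sum.inl (a, y'))
      rw [cE] at e2
      have e3 : dE (g0 (Sum.inl (a, y))) (g0 (Sum.inl (a, y'))) ≤ 1 :=
        (Id a y y').trans (dist_eq_one_iff_adj.2 h).le
      have e4 := tE (g (D.toAmalg (Sum.inl (a, y)))) (g0 (Sum.inl (a, y))) (g0 (Sum.inl (a, y')))
      have e5 := tE (g (D.toAmalg (Sum.inl (a, y)))) (g0 (Sum.inl (a, y')))
        (g (D.toAmalg (Sum.inl (a, y'))))
      omega
    · have e1 := hg (Sum.inr (b, y))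
      have e2 := hg (Sum.inr (b, y'))
      rw [cE] at e2
      have e3 : g0 (Sum.inr (b, y')) = g0 (Sum.inr (b, y)) := rfl
      rw [e3] at e2
      have e5 := tE (g (D.toAmalg (Sum.inr (b, y)))) (g0 (Sum.inr (b, y)))
        (g (D.toAmalg (Sum.inr (b, y'))))
      omega
  · intro u v huv
    show dA (f u) (f v) ≤ _
    obtain ⟨c, y, y', rfl, rfl, h⟩ := newE_adj G1 N huv
    have e1 := hfd c y
    have e2 := hfd c y'
    rw [cA] at e2
    have e3 := (ιd c y y').trans (dist_eq_one_iff_adj.2 h).le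
    have e4 := tA (f (I c y)) (ι c y) (ι c y')
    have e5 := tA (f (I c y)) (ι c y') (f (I c y'))
    have e6 : dA (f (I c y)) (f (I c y')) ≤ 2 * C6 + 1 + (2 * C5 + 1) := by omega
    exact e6
  · intro v
    obtain ⟨p, rfl⟩ := D.toAmalg_surj v
    show dA (f (g0 (R.can p))) (D.toAmalg p) ≤ _
    rw [← R.toAmalg_can p]
    rcases R.can p with ⟨a, y⟩ | ⟨b, y⟩
    · have := hfd a y
      show dA (f (I a y)) (ι a y) ≤ _
      omega
    · have e1 := hfd (R.pa b) (x (R.l1 (R.pa b) b))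
      have e2 := hinr (R.pa b) b _ (R.pa_adj b) rfl
      have e3 : dA (ι (R.pa b) (x (R.l1 (R.pa b) b))) (D.toAmalg (Sum.inr (b, y))) ≤ m2 := by
        rw [e2]
        exact (D.dist_inr_le hc2 hA _ _ _).trans (hm2 _ _)
      have e4 := tA (f (I (R.pa b) (x (R.l1 (R.pa b) b)))) (ι (R.pa b) (x (R.l1 (R.pa b) b)))
        (D.toAmalg (Sum.inr (b, y)))
      show dA (f (I (R.pa b) (x (R.l1 (R.pa b) b)))) (D.toAmalg (Sum.inr (b, y))) ≤ _
      omega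
  · intro w
    obtain ⟨a, y, rfl⟩ := iE_surj G1 N w
    show dE (g (f (I a y))) (I a y) ≤ _
    have h0 : f (I a y) = ι (slotF N a y).1 (slotF N a y).2 := hf a y
    have h1 : I (slotF N a y).1 (slotF N a y).2 = I a y := by
      rcases slotF_cases N a y with ⟨c, h1, rfl, rfl, h2⟩ | h
      · rw [h2]; exact (Ig c h1).symm
      · rw [h]
    have h2 : dE (g (f (I a y))) (I (slotF N a y).1 (slotF N a y).2) ≤ C6 := by
      rw [h0]
      exact hg (Sum.inl ((slotF N a y).1, (slotF N a y).2))
    rw [h1] at h2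
    omega

/-- **Lemma.** Let `G` be an infinite locally finite quasi-transitive connected graph with a
factorisation `(G1, G2)` (realised by the tree amalgamation `D`) such that `G1` is infinite,
`G2` is finite and the amalgamating tree is not a star (it has diameter greater than `2`).
Then `G` is quasi-isometric to a non-trivial tree amalgamation `G1 ∗ G1`. -/
theorem quasiIsometric_amalg_self_of_finite_factor {V V1 V2 : Type u}
    (G : SimpleGraph V) (G1 : SimpleGraph V1) (G2 : SimpleGraph V2)
    (hc : G.Connected) (hlf : LocallyFiniteGraph G) (hqt : QuasiTransitive G)
    (hGinf : Infinite V)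
    (hc1 : G1.Connected) (hc2 : G2.Connected)
    (hlf1 : LocallyFiniteGraph G1) (hlf2 : LocallyFiniteGraph G2)
    (hqt1 : QuasiTransitive G1) (hqt2 : QuasiTransitive G2)
    (D : TreeAmalgData G1 G2) (hDa : D.FiniteAdhesion) (hDi : D.FiniteIdentification)
    (hD1 : GoodAction G1 D.S1) (hD2 : GoodAction G2 D.S2)
    (hiso : Nonempty (G ≃g D.amalgGraph))
    (h1inf : Infinite V1) (h2fin : Finite V2)
    (hstar : ∃ x y : D.VT1 ⊕ D.VT2, 2 < (bipGraph D.Tadj).dist x y) :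
    ∃ E : TreeAmalgData G1 G1, ¬ E.IsTrivial ∧ QuasiIsometric G E.amalgGraph := by
  obtain ⟨i⟩ := hiso
  obtain ⟨R⟩ := D.exists_rooted hstar
  have hA : D.amalgGraph.Connected := (i.connected_iff).1 hc
  obtain ⟨E, h1, h2⟩ := R.exists_newE hc1 hc2 hlf1 hqt1 hA (LocallyFiniteGraph.of_iso i hlf)
    (QuasiTransitive.of_iso i hqt) hDa.1 hD1
  exact ⟨E, h1, QuasiIsometric.of_iso hc i h2⟩
end

section
/- Every connected locally finite quasi-transitive graph G is unvarying: there is a constant γ ≥ 1 such that for every pair of vertices u, v of G there is a γ-bilipschitz equivalence f: V(G) → V(G) (a surjection with γ⁻¹·d_G(x,y) ≤ d_G(f(x),f(y)) ≤ γ·d_G(x,y) for all x, y ∈ V(G)) with f(u) = v. -/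
open SimpleGraph

universe u v

theorem aux_dist_le {V : Type u} (G : SimpleGraph V) (hc : G.Connected) (g : G ≃g G) (x y : V) :
    G.dist (g x) (g y) ≤ G.dist x y := by
  obtain ⟨p, hp⟩ := hc.exists_walk_length_eq_dist x y
  rw [← hp, ← SimpleGraph.Walk.length_map g.toHom p]
  exact SimpleGraph.dist_le (p.map g.toHom)

theorem aux_dist_eq {V : Type u} (G : SimpleGraph V) (hc : G.Connected) (g : G ≃g G) (x y : V) :
    G.dist (g x) (g y) = G.dist x y := by
  apply le_antisymm (aux_dist_le G hc g x y)
  have h := aux_dist_le G hc g.symm (g x) (g y)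
  simpa using h

open Classical in
theorem aux_swap {V : Type u} (G : SimpleGraph V) (hc : G.Connected) (a b : V) (D : ℕ)
    (hD : G.dist a b ≤ D) (x y : V) :
    G.dist (Equiv.swap a b x) (Equiv.swap a b y) ≤ (1 + 2 * D) * G.dist x y := by
  by_cases hxy : x = y
  · subst hxy; simp
  have hpos : 1 ≤ G.dist x y := hc.pos_dist_of_ne hxy
  have hdisp : ∀ z, G.dist (Equiv.swap a b z) z ≤ D := by
    intro z
    rw [Equiv.swap_apply_def]
    split_ifs with h1 h2
    · rw [h1, SimpleGraph.dist_comm]; exact hD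
    · rw [h2]; exact hD
    · simp
  have h1 := hdisp x
  have h2 := hdisp y
  rw [SimpleGraph.dist_comm] at h2
  have h3 := hc.dist_triangle (u := Equiv.swap a b x) (v := x) (w := Equiv.swap a b y)
  have h4 := hc.dist_triangle (u := x) (v := y) (w := Equiv.swap a b y)
  nlinarith

/-- **Remark.** Every connected locally finite quasi-transitive graph is unvarying: there is
`γ ≥ 1` such that for all vertices `u`, `v` there is a `γ`-bilipschitz equivalence
`G → G` mapping `u` to `v`. -/
theorem quasiTransitive_unvarying {V : Type u} (G : SimpleGraph V)
    (hc : G.Connected) (hlf : LocallyFiniteGraph G) (hqt : QuasiTransitive G) :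
    ∃ γ : ℝ, 1 ≤ γ ∧ ∀ u v : V, ∃ f : V → V, Function.Surjective f ∧ f u = v ∧
      ∀ x y : V, γ⁻¹ * (G.dist x y : ℝ) ≤ (G.dist (f x) (f y) : ℝ) ∧
        (G.dist (f x) (f y) : ℝ) ≤ γ * (G.dist x y : ℝ) := by
  classical
  obtain ⟨s, hs, horb⟩ := hqt
  obtain ⟨D, hD⟩ := ((hs.prod hs).image (fun p : V × V => G.dist p.1 p.2)).bddAbove
  have hD' : ∀ a ∈ s, ∀ b ∈ s, G.dist a b ≤ D := fun a ha b hb =>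
    hD ⟨(a, b), ⟨ha, hb⟩, rfl⟩
  have hγ : (1 : ℝ) ≤ 1 + 2 * (D : ℝ) := by
    have : (0 : ℝ) ≤ D := Nat.cast_nonneg D
    linarith
  refine ⟨1 + 2 * (D : ℝ), hγ, fun u v => ?_⟩
  obtain ⟨a, ha, g, rfl⟩ := horb u
  obtain ⟨b, hb, h, rfl⟩ := horb v
  have key := aux_swap G hc a b D (hD' a ha b hb)
  refine ⟨fun x => h (Equiv.swap a b (g.symm x)), ?_, by simp, fun x y => ?_⟩
  · exact h.surjective.comp ((Equiv.swap a b).surjective.comp g.symm.surjective)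
  · simp only [aux_dist_eq G hc h]
    rw [← aux_dist_eq G hc g.symm x y]
    generalize g.symm x = x'
    generalize g.symm y = y'
    constructor
    · rw [inv_mul_le_iff₀ (by linarith)]
      have := key (Equiv.swap a b x') (Equiv.swap a b y')
      simp only [Equiv.swap_apply_self] at this
      exact_mod_cast this
    · exact_mod_cast key x' y'
end
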